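/- arXiv:2108.09046 — 2 statements merged into one kernel-verified Lean document; each statement's English description precedes it below -/
import Mathlib

section
/- Fix λ̂ > 0, set 𝔠 = λ̂²/π, fix K ≥ 1 and let H, H⁺ be as in the context. For an integer N ≥ 2, μ ≥ 0, an integer n ≥ 1 and k_{1:n} = (k_1,…,k_n) ∈ (ℤ²∖{0})ⁿ, set E(ℓ,m) = ½(|ℓ|² + |m|² + |k_2|² + ⋯ + |k_n|²) and define P^N(μ, k_{1:n}) = (4λ̂²/log N) · Σ_{ℓ,m ∈ ℤ²∖{0}, ℓ+m = k_1} (𝒦^N_{ℓ,m})² · (μ + E(ℓ,m)·H⁺(L^N(μ + E(ℓ,m)))) / (μ + E(ℓ,m)·H(L^N(μ + E(ℓ,m))))². Then lim_{N→∞} sup { |P^N(μ, k_{1:n}) − ∫_0^{L^N(μ + ½|k_{1:n}|²)} H⁺(y)/H(y)² dy| : n ≥ 1, μ ≥ 0, k_{1:n} ∈ (ℤ²∖{0})ⁿ } = 0, where |k_{1:n}|² = |k_1|² + ⋯ + |k_n|². -/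
/-!
# The replacement sum is asymptotically an integral

Write `c = lam ^ 2 / π`, `S = |k₁|² + ⋯ + |k_n|²`, `A = μ + S / 2`, `h = H⁺ / H²` and `L = LN c N`.
The sum over `ℓ + m = k₁` is a sum over `ℓ ∈ ℤ²` with `m = k₁ - ℓ`, and there
`X := μ + E(ℓ, m) = A + |ℓ|² - ℓ · k₁`. As `|k₁|² ≤ 2A`, this is comparable to `A + |ℓ|²`.

Sum over sup-norm spheres `box n = {ℓ : |ℓ|_∞ = n}`. On `box n`, `4π²` times the summand is replaced
by `h (L (A + n²)) · n² / (A + n²) · q(ℓ)` with `q(ℓ) = (ℓ₂² - ℓ₁²)² / |ℓ|⁶`. This involves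
* replacing the quotient `(μ + E H⁺) / (μ + E H)²` by `h / X` (`ratio_err`),
* replacing `c(ℓ, m)² / (|ℓ|² |m|²)` by its value at `m = -ℓ` (`weight_err`),
* replacing `1 / X` by `n² / ((A + n²) |ℓ|²)` (`inv_err`),
* replacing `L X` by `L (A + n²)`, which costs `O(1 / log N)` (`LN_sub_le`),
* and dropping the cutoffs of the kernel, where either `ℓ = k₁` or `A + n²` is at least of order `N²`.

The total error is at most a constant times
`√A / (n (A + n²)) + 1 / N² + 1_{ℓ = k₁} + 1 / (n² log N)` (`pointwise`), and since `box n` has `8 n`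
points these errors add up to `O(1)` (`error_sum`), uniformly in `A` and `k₁`. The prefactor
`1 / log N` makes them negligible.

Next, `∑_{ℓ ∈ box n} q(ℓ) = π / n + O(n⁻²)` (`box_weight`): along a side of the square,
`q(n, j) = φ(j / n) / n²` with `φ(t) = (1 - t²)² / (1 + t²)³`, which is decreasing on `[0, 1]` and has
integral `π / 8`. There remains `c / log N · ∑_{n ≤ N} h (L (A + n²)) · n / (A + n²)`. The points
`L (A + n²)` partition an interval from `O(1 / log N)` to `L A`, with consecutive differences
`c / log N · n / (A + n²)` up to a summable error (`log_step`), so that this is a Riemann sum of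
`∫₀^{L A} h` with error `O(1 / log N)` (`riemann_log`).

If `|k₁| > N`, the kernel vanishes and the integral itself is `O(1 / log N)`. Altogether the
difference is at most `C / log N` with `C` depending on `c` and `K` only (`main_bound`).
-/

/-- Embedding of the lattice `ℤ²` into `ℝ²`. -/
def latR (l : ℤ × ℤ) : ℝ × ℝ := ((l.1 : ℝ), (l.2 : ℝ))

/-- Squared Euclidean norm `|ℓ|²` of a lattice point. -/
noncomputable def nsq (l : ℤ × ℤ) : ℝ := (l.1 : ℝ) ^ 2 + (l.2 : ℝ) ^ 2

/-- Squared Euclidean norm `|x|²` on `ℝ²`. -/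
noncomputable def rnsq (x : ℝ × ℝ) : ℝ := x.1 ^ 2 + x.2 ^ 2

/-- `c(x,y) = x₂ y₂ − x₁ y₁`. -/
noncomputable def cfun (x y : ℝ × ℝ) : ℝ := x.2 * y.2 - x.1 * y.1

open Classical in
/-- The kernel `𝒦^N_{x,y} = (1/2π) · c(x,y)/(|x||y|) · 1_{1 ≤ |x| ≤ N, 1 ≤ |y| ≤ N, |x+y| ≤ N}`,
vanishing if `x = 0` or `y = 0`. -/
noncomputable def Kker (N : ℕ) (x y : ℝ × ℝ) : ℝ :=
  if x ≠ 0 ∧ y ≠ 0 ∧ 1 ≤ Real.sqrt (rnsq x) ∧ Real.sqrt (rnsq x) ≤ N ∧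
      1 ≤ Real.sqrt (rnsq y) ∧ Real.sqrt (rnsq y) ≤ N ∧ Real.sqrt (rnsq (x + y)) ≤ N then
    (1 / (2 * Real.pi)) * (cfun x y / (Real.sqrt (rnsq x) * Real.sqrt (rnsq y)))
  else 0

/-- `L^N(x) = (𝔠 / log(N²)) · log(1 + N²/x)`. -/
noncomputable def LN (c : ℝ) (N : ℕ) (x : ℝ) : ℝ :=
  c / Real.log ((N : ℝ) ^ 2) * Real.log (1 + (N : ℝ) ^ 2 / x)

/-- `E(ℓ,m) = ½(|ℓ|² + |m|² + tail)` where `tail = |k_2|² + ⋯ + |k_n|²`. -/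
noncomputable def Efun (tail : ℝ) (l m : ℤ × ℤ) : ℝ := (nsq l + nsq m + tail) / 2


/-! ### Pointwise comparison estimates -/

/-- Replacing `(μ + E p) / (μ + E q)²` by `(p / q²) / (μ + E)`. The two agree at `μ = 0`, which is
where the factor `μ` in the bound comes from. -/
lemma ratio_err {μ E p q K : ℝ} (hμ : 0 ≤ μ) (hE : 0 < E) (hp : 0 ≤ p) (hpK : p ≤ K)
    (hq : 1 ≤ q) (hqK : q ≤ K) :
    |(μ + E * p) / (μ + E * q) ^ 2 - p / q ^ 2 / (μ + E)| ≤ 4 * K ^ 3 * μ / (μ + E) ^ 2 := by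
  have hK : 1 ≤ K := hq.trans hqK
  have hX : 0 < μ + E := by positivity
  have hq0 : 0 < q := by linarith
  have hD : 0 < μ + E * q := by positivity
  have hDX : μ + E ≤ μ + E * q := by nlinarith
  have key : (μ + E * p) / (μ + E * q) ^ 2 - p / q ^ 2 / (μ + E)
      = μ * (q ^ 2 * (μ + E) + E * p * q ^ 2 - p * μ - 2 * E * p * q) /
        ((μ + E * q) ^ 2 * (q ^ 2 * (μ + E))) := by
    field_simp
    ring
  have hq2 : q ^ 2 ≤ K ^ 2 := by gcongr
  have hK23 : K ^ 2 ≤ K ^ 3 := pow_le_pow_right₀ hK (by norm_num)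
  have hK13 : K ≤ K ^ 3 := le_self_pow₀ hK (by norm_num)
  have b1 : q ^ 2 * (μ + E) ≤ K ^ 3 * (μ + E) := by gcongr; linarith
  have b2 : E * p * q ^ 2 ≤ K ^ 3 * (μ + E) := by
    have : p * q ^ 2 ≤ K * K ^ 2 := by gcongr
    nlinarith [pow_pos (by linarith : 0 < K) 3]
  have b3 : p * μ + 2 * E * p * q ≤ 2 * K ^ 3 * (μ + E) := by
    have h1 : p * q ≤ K * K := by gcongr
    have h2 : E * (p * q) ≤ E * K ^ 3 := by gcongr; nlinarith
    have h3 : p * μ ≤ K ^ 3 * μ := by gcongr; linarith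
    nlinarith [mul_nonneg hμ (pow_pos (by linarith : 0 < K) 3).le]
  have hb : |q ^ 2 * (μ + E) + E * p * q ^ 2 - p * μ - 2 * E * p * q| ≤ 4 * K ^ 3 * (μ + E) := by
    have p1 : 0 ≤ q ^ 2 * (μ + E) := by positivity
    have p2 : 0 ≤ E * p * q ^ 2 := by positivity
    have p3 : 0 ≤ p * μ + 2 * E * p * q := by positivity
    have p4 : 0 ≤ K ^ 3 * (μ + E) := by positivity
    rw [abs_le]; constructor <;> linarith
  rw [key, abs_div, abs_mul, abs_of_nonneg hμ,
    abs_of_pos (by positivity : 0 < (μ + E * q) ^ 2 * (q ^ 2 * (μ + E)))]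
  have hden : (μ + E) ^ 2 * (μ + E) ≤ (μ + E * q) ^ 2 * (q ^ 2 * (μ + E)) := by
    have : 1 ≤ q ^ 2 := one_le_pow₀ hq
    have h1 : (μ + E) ^ 2 ≤ (μ + E * q) ^ 2 := by gcongr
    have h2 : μ + E ≤ q ^ 2 * (μ + E) := by nlinarith
    gcongr
  calc _ ≤ μ * (4 * K ^ 3 * (μ + E)) / ((μ + E) ^ 2 * (μ + E)) := by gcongr
    _ = _ := by field_simp

/-- The Cauchy-Schwarz inequality in `ℝ²`, in coordinates. -/
lemma cs2 (x₁ x₂ y₁ y₂ : ℝ) :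
    |x₁ * y₁ + x₂ * y₂| ≤ √(x₁ ^ 2 + x₂ ^ 2) * √(y₁ ^ 2 + y₂ ^ 2) := by
  rw [← Real.sqrt_mul (by positivity)]
  apply Real.abs_le_sqrt
  nlinarith [sq_nonneg (x₁ * y₂ - x₂ * y₁)]

lemma sqrt_triangle (x₁ x₂ y₁ y₂ : ℝ) :
    √((x₁ + y₁) ^ 2 + (x₂ + y₂) ^ 2) ≤ √(x₁ ^ 2 + x₂ ^ 2) + √(y₁ ^ 2 + y₂ ^ 2) := by
  apply Real.sqrt_le_iff.2
  refine ⟨by positivity, ?_⟩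
  have h := (abs_le.1 (cs2 x₁ x₂ y₁ y₂)).2
  have h1 := Real.sq_sqrt (by positivity : 0 ≤ x₁ ^ 2 + x₂ ^ 2)
  have h2 := Real.sq_sqrt (by positivity : 0 ≤ y₁ ^ 2 + y₂ ^ 2)
  nlinarith

lemma weight_le_one (a b p q : ℝ) :
    ((b * q - a * p) / (√(a ^ 2 + b ^ 2) * √(p ^ 2 + q ^ 2))) ^ 2 ≤ 1 := by
  rw [sq_le_one_iff_abs_le_one, abs_div, abs_of_nonneg
    (by positivity : 0 ≤ √(a ^ 2 + b ^ 2) * √(p ^ 2 + q ^ 2))]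
  apply div_le_one_of_le₀ _ (by positivity)
  have := cs2 a b (-p) q
  rw [neg_sq] at this
  rwa [show a * -p + b * q = b * q - a * p by ring] at this

/-- With `ℓ = (a, b)`, `k = (u, v)` and `m = k - ℓ`, replacing `c(ℓ, m)² / (|ℓ|² |m|²)` by its value
at `m = -ℓ` costs at most `4 |k| / |ℓ|`. -/
lemma weight_err (a b u v : ℝ) (hr : 0 < a ^ 2 + b ^ 2) (hm : 0 < (u - a) ^ 2 + (v - b) ^ 2) :
    |((b * (v - b) - a * (u - a)) / (√(a ^ 2 + b ^ 2) * √((u - a) ^ 2 + (v - b) ^ 2))) ^ 2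
      - ((b ^ 2 - a ^ 2) / (a ^ 2 + b ^ 2)) ^ 2| ≤ 4 * √(u ^ 2 + v ^ 2) / √(a ^ 2 + b ^ 2) := by
  have hw := weight_le_one a b (u - a) (v - b)
  have hw0 := weight_le_one a b (-a) (-b)
  have t1 := sqrt_triangle (u - a) (v - b) (-u) (-v)
  have t2 := sqrt_triangle (-a) (-b) u v
  have c1 := cs2 a b (u - a) (v - b)
  have c2 := cs2 a b (-u) v
  have c3 := cs2 a b (-(u - a)) (v - b)
  have hr2 := Real.sq_sqrt hr.le
  set r := √(a ^ 2 + b ^ 2) with hrdef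
  set m := √((u - a) ^ 2 + (v - b) ^ 2) with hmdef
  set κ := √(u ^ 2 + v ^ 2) with hκ
  have hr' : 0 < r := Real.sqrt_pos.2 hr
  have hm' : 0 < m := Real.sqrt_pos.2 hm
  rw [show (u - a + -u) ^ 2 + (v - b + -v) ^ 2 = a ^ 2 + b ^ 2 by ring,
    show (-u) ^ 2 + (-v) ^ 2 = u ^ 2 + v ^ 2 by ring, ← hrdef, ← hκ] at t1
  rw [show (-a + u) ^ 2 + (-b + v) ^ 2 = (u - a) ^ 2 + (v - b) ^ 2 by ring,
    show (-a) ^ 2 + (-b) ^ 2 = a ^ 2 + b ^ 2 by ring, ← hrdef, ← hmdef] at t2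
  rw [neg_sq, ← hκ] at c2
  rw [neg_sq, ← hmdef] at c3
  rw [show (-a) ^ 2 + (-b) ^ 2 = a ^ 2 + b ^ 2 by ring, ← hrdef] at hw0
  have e0 : ((b ^ 2 - a ^ 2) / (a ^ 2 + b ^ 2)) ^ 2 = ((b * (-b) - a * (-a)) / (r * r)) ^ 2 := by
    rw [← hr2]; ring
  rw [e0]
  set α := (b * (v - b) - a * (u - a)) / (r * m) with hα
  set β := (b * (-b) - a * (-a)) / (r * r) with hβ
  have hab : |α - β| ≤ 2 * κ / r := by
    have : α - β = (a * -(u - a) + b * (v - b)) * (r - m) / (r ^ 2 * m)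
        + (a * (-u) + b * v) / r ^ 2 := by
      rw [hα, hβ]; field_simp; ring
    rw [this]
    have hrm : |r - m| ≤ κ := by rw [abs_le]; constructor <;> linarith
    calc _ ≤ _ := abs_add_le _ _
      _ = |a * -(u - a) + b * (v - b)| * |r - m| / (r ^ 2 * m) + |a * (-u) + b * v| / r ^ 2 := by
        rw [abs_div, abs_mul, abs_div, abs_of_pos (by positivity : 0 < r ^ 2 * m),
          abs_of_pos (by positivity : 0 < r ^ 2)]
      _ ≤ (r * m) * κ / (r ^ 2 * m) + (r * κ) / r ^ 2 := by gcongr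
      _ = 2 * κ / r := by field_simp; ring
  have hα1 : |α| ≤ 1 := by rwa [← sq_le_one_iff_abs_le_one]
  have hβ1 : |β| ≤ 1 := by rwa [← sq_le_one_iff_abs_le_one]
  calc |α ^ 2 - β ^ 2| = |α + β| * |α - β| := by rw [← abs_mul]; ring_nf
    _ ≤ 2 * (2 * κ / r) := by
      gcongr
      exact (abs_add_le _ _).trans (by linarith)
    _ = _ := by ring

/-- Here `r` stands for `|ℓ|` with `|ℓ|_∞ = n`, `κ` for `|k₁|` and `d` for `ℓ · k₁`. The quantity
`A + r² - d` is comparable to `A + n²`, and its inverse is `n² / ((A + n²) r²)` up to an error that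
is summable over the spheres uniformly in `A`. -/
lemma inv_err {A n r κ d : ℝ} (hA : 0 < A) (hn : 0 < n) (hr0 : 0 ≤ r)
    (hr1 : n ^ 2 ≤ r ^ 2) (hr2 : r ^ 2 ≤ 2 * n ^ 2) (hκ : κ ^ 2 ≤ 2 * A) (hd : |d| ≤ r * κ) :
    (A + n ^ 2) / 4 ≤ A + r ^ 2 - d ∧ A + r ^ 2 - d ≤ 8 * (A + n ^ 2) ∧
    |1 / (A + r ^ 2 - d) - n ^ 2 / ((A + n ^ 2) * r ^ 2)| ≤ 9 * (√A / (n * (A + n ^ 2))) := by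
  obtain ⟨hd1, hd2⟩ := abs_le.1 hd
  have hX4 : (A + r ^ 2) / 4 ≤ A + r ^ 2 - d := by nlinarith [sq_nonneg (3 * κ - 4 * r)]
  have hX : (A + n ^ 2) / 4 ≤ A + r ^ 2 - d := by linarith
  refine ⟨hX, by nlinarith [sq_nonneg (κ - r)], ?_⟩
  have hs2 := Real.sq_sqrt hA.le
  have hs := Real.sqrt_pos.2 hA
  set s := √A
  set X := A + r ^ 2 - d with hXd
  have hY : 0 < A + n ^ 2 := by positivity
  set Y := A + n ^ 2 with hYd
  have hXp : 0 < X := by linarith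
  have hrp : 0 < r ^ 2 := by nlinarith
  have hrp' : 0 < r := hr0.lt_of_ne' (by rintro rfl; simp at hrp)
  have hdb : |d| ≤ 2 * n * s := by
    refine hd.trans (abs_le_of_sq_le_sq' ?_ (by positivity)).2
    calc (r * κ) ^ 2 = r ^ 2 * κ ^ 2 := by ring
      _ ≤ (2 * n ^ 2) * (2 * A) := by gcongr
      _ = _ := by rw [← hs2]; ring
  have hZ : 0 < A + r ^ 2 := by positivity
  have hYZ : Y ≤ A + r ^ 2 := by linarith
  have e1 : |1 / X - 1 / (A + r ^ 2)| ≤ 8 * (s / (n * Y)) := by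
    have : 1 / X - 1 / (A + r ^ 2) = d / (X * (A + r ^ 2)) := by
      field_simp; rw [hXd]; ring
    rw [this, abs_div, abs_of_pos (by positivity : 0 < X * (A + r ^ 2))]
    calc |d| / (X * (A + r ^ 2)) ≤ (2 * n * s) / (Y / 4 * Y) := by gcongr
      _ = 8 * n * s / (Y * Y) := by field_simp; ring
      _ ≤ 8 * (s / (n * Y)) := by
        rw [← mul_div_assoc, div_le_div_iff₀ (by positivity) (by positivity)]
        have : n ^ 2 ≤ Y := by linarith
        have h3 : 8 * s * Y * n ^ 2 ≤ 8 * s * Y * Y := by gcongr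
        nlinarith
  have e2 : |1 / (A + r ^ 2) - n ^ 2 / (Y * r ^ 2)| ≤ s / (n * Y) := by
    have : 1 / (A + r ^ 2) - n ^ 2 / (Y * r ^ 2)
        = A * ((r ^ 2 - n ^ 2) / r ^ 2) / ((A + r ^ 2) * Y) := by
      field_simp; rw [hYd]; ring
    have h1 : 0 ≤ (r ^ 2 - n ^ 2) / r ^ 2 := div_nonneg (by linarith) hrp.le
    have h2 : (r ^ 2 - n ^ 2) / r ^ 2 ≤ 1 := (div_le_one hrp).2 (by nlinarith)
    rw [this, abs_of_nonneg (by positivity)]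
    calc _ ≤ A * 1 / (Y * Y) := by gcongr
      _ ≤ _ := by
        rw [div_le_div_iff₀ (by positivity) (by positivity)]
        have h5 : s * n ≤ Y := by nlinarith [sq_nonneg (s - n)]
        have h3 : s * Y * (s * n) ≤ s * Y * Y := by gcongr
        have h4 : A * 1 * (n * Y) = s * Y * (s * n) := by rw [← hs2]; ring
        linarith
  calc _ ≤ |1 / X - 1 / (A + r ^ 2)| + |1 / (A + r ^ 2) - n ^ 2 / (Y * r ^ 2)| := abs_sub_le _ _ _
    _ ≤ _ := by linarith

/-! ### Elementary sums and sup-norm spheres -/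

/-- A bound uniform in `A`, obtained by telescoping `n / (√A + n)`; it stands in for the comparison
with the integral of `√A / (A + x²)`. -/
lemma sum_sqrt_le {A : ℝ} (hA : 0 < A) (N : ℕ) :
    ∑ n ∈ Finset.range N, √A / (A + ((n : ℝ) + 1) ^ 2) ≤ 2 := by
  have hs2 := Real.sq_sqrt hA.le
  have hs := Real.sqrt_pos.2 hA
  set s := √A
  have : ∑ n ∈ Finset.range N, s / (A + ((n : ℝ) + 1) ^ 2) ≤ 2 * (N / (s + N)) := by
    induction N with
    | zero => simp
    | succ N ih =>
      rw [Finset.sum_range_succ]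
      have h1 : s / (A + ((N : ℝ) + 1) ^ 2) ≤ 2 * (s / ((s + N) * (s + (N + 1)))) := by
        rw [← mul_div_assoc, div_le_div_iff₀ (by positivity) (by positivity), mul_comm 2 s,
          mul_assoc]
        apply mul_le_mul_of_nonneg_left _ hs.le
        rw [← hs2]
        nlinarith [sq_nonneg (s - (N + 1))]
      have h2 : s / ((s + N) * (s + (N + 1))) = (N + 1) / (s + (N + 1)) - N / (s + N) := by
        field_simp; ring
      push_cast
      rw [h2] at h1
      linarith
  refine this.trans ?_
  have : (N : ℝ) / (s + N) ≤ 1 := div_le_one_of_le₀ (by linarith) (by positivity)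
  linarith

lemma sum_inv_sq_le (N : ℕ) : ∑ n ∈ Finset.range N, 1 / ((n : ℝ) + 1) ^ 2 ≤ 2 := by
  have key : ∀ M : ℕ, ∑ n ∈ Finset.range (M + 1), 1 / ((n : ℝ) + 1) ^ 2 ≤ 2 - 1 / ((M : ℝ) + 1) := by
    intro M
    induction M with
    | zero => norm_num
    | succ M ih =>
      rw [Finset.sum_range_succ]
      push_cast
      have h1 : 1 / ((M : ℝ) + 1 + 1) ^ 2 ≤ 1 / ((M : ℝ) + 1) - 1 / ((M : ℝ) + 1 + 1) := by
        rw [div_sub_div _ _ (by positivity) (by positivity),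
          div_le_div_iff₀ (by positivity) (by positivity)]
        nlinarith [(Nat.cast_nonneg M : (0 : ℝ) ≤ M)]
      linarith
  cases N with
  | zero => simp
  | succ M => exact (key M).trans (by have : 0 ≤ 1 / ((M : ℝ) + 1) := by positivity
                                      linarith)

lemma sum_lin_le {N : ℕ} (hN : 1 ≤ N) :
    ∑ n ∈ Finset.range N, ((n : ℝ) + 1) / (N : ℝ) ^ 2 ≤ 1 := by
  have key : ∀ M : ℕ, ∑ n ∈ Finset.range M, ((n : ℝ) + 1) = M * (M + 1) / 2 := by
    intro M
    induction M with
    | zero => simp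
    | succ M ih => rw [Finset.sum_range_succ, ih]; push_cast; ring
  have h1 : (1 : ℝ) ≤ N := by exact_mod_cast hN
  rw [← Finset.sum_div, key, div_le_one (by positivity)]
  nlinarith

lemma sum_inv_le (N : ℕ) :
    ∑ n ∈ Finset.range N, 1 / ((n : ℝ) + 1) ≤ 1 + Real.log N := by
  have := harmonic_le_one_add_log N
  rw [harmonic] at this
  push_cast at this
  simpa [one_div] using this

open Finset in
lemma box_sum_le (n : ℕ) (f : ℤ × ℤ → ℝ) (c : ℝ) (h : ∀ l ∈ box (α := ℤ × ℤ) (n + 1), f l ≤ c) :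
    ∑ l ∈ box (n + 1), f l ≤ 8 * ((n : ℝ) + 1) * c := by
  have := Finset.sum_le_card_nsmul _ f c h
  rw [Int.card_box (by omega), nsmul_eq_mul] at this
  push_cast at this
  exact this

open Finset in
lemma box_bounds {n : ℕ} {l : ℤ × ℤ} (h : l ∈ box n) :
    (n : ℝ) ^ 2 ≤ (l.1 : ℝ) ^ 2 + (l.2 : ℝ) ^ 2 ∧
      (l.1 : ℝ) ^ 2 + (l.2 : ℝ) ^ 2 ≤ 2 * (n : ℝ) ^ 2 := by
  rw [Int.mem_box] at h
  have e1 : (l.1 : ℝ) ^ 2 = ((l.1.natAbs : ℕ) : ℝ) ^ 2 := by simp [Nat.cast_natAbs]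
  have e2 : (l.2 : ℝ) ^ 2 = ((l.2.natAbs : ℕ) : ℝ) ^ 2 := by simp [Nat.cast_natAbs]
  rw [e1, e2]
  have h1 : l.1.natAbs ≤ n := by omega
  have h2 : l.2.natAbs ≤ n := by omega
  have h1' : ((l.1.natAbs : ℕ) : ℝ) ^ 2 ≤ (n : ℝ) ^ 2 := by gcongr
  have h2' : ((l.2.natAbs : ℕ) : ℝ) ^ 2 ≤ (n : ℝ) ^ 2 := by gcongr
  refine ⟨?_, by linarith⟩
  rcases max_choice l.1.natAbs l.2.natAbs with hc | hc <;> rw [hc] at h <;> rw [h]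
  · exact le_add_of_nonneg_right (by positivity)
  · exact le_add_of_nonneg_left (by positivity)

/-! ### The angular average -/

/-- The angular profile `φ(t) = (1 - t²)² / (1 + t²)³` of `qd` along one side of a square. -/
noncomputable def phi (t : ℝ) : ℝ := (1 - t ^ 2) ^ 2 / (1 + t ^ 2) ^ 3

lemma phi_antitone : AntitoneOn phi (Set.Icc 0 1) := by
  intro x hx y hy hxy
  unfold phi
  have h1 : y ^ 2 ≤ 1 := by nlinarith [hy.1, hy.2]
  have h2 : x ^ 2 ≤ y ^ 2 := by have := hx.1; gcongr
  have h3 : 0 ≤ 1 - y ^ 2 := by linarith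
  gcongr

/-- An explicit primitive of `phi`, with increment `π / 8` over `[0, 1]`. -/
lemma phi_hasDeriv (t : ℝ) : HasDerivAt
    (fun t : ℝ => Real.arctan t / 2 + t * (1 - t ^ 2) / (2 * (1 + t ^ 2) ^ 2)) (phi t) t := by
  have h1 := (Real.hasDerivAt_arctan t).div_const 2
  have hn : HasDerivAt (fun t : ℝ => t * (1 - t ^ 2)) (1 * (1 - t ^ 2) + t * (-(2 * t))) t := by
    have := (hasDerivAt_id' t).fun_mul (((hasDerivAt_id t).pow 2).const_sub 1)
    simpa using this
  have hd : HasDerivAt (fun t : ℝ => 2 * (1 + t ^ 2) ^ 2) (2 * (2 * (1 + t ^ 2) * (2 * t))) t := by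
    have := ((((hasDerivAt_id t).pow 2).const_add 1).pow 2).const_mul 2
    simpa using this
  have := h1.add (hn.div hd (by positivity))
  refine this.congr_deriv ?_
  unfold phi
  field_simp
  ring

lemma phi_integral {n : ℝ} (hn : 0 < n) : ∫ x in (0 : ℝ)..n, phi (x / n) = n * (Real.pi / 8) := by
  rw [intervalIntegral.integral_comp_div _ hn.ne', zero_div, div_self hn.ne',
    intervalIntegral.integral_eq_sub_of_hasDerivAt (fun t _ => phi_hasDeriv t)]
  · simp; left; ring
  · apply Continuous.intervalIntegrable
    unfold phi
    exact Continuous.div (by fun_prop) (by fun_prop) (fun x => by positivity)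

/-- Monotone comparison of the sum with the integral, using `phi 0 = 1` and `phi 1 = 0`. -/
lemma phi_sum {n : ℕ} (hn : 0 < n) :
    |∑ j ∈ Finset.range n, phi (j / n) - n * (Real.pi / 8)| ≤ 1 := by
  have hn' : (0 : ℝ) < n := by exact_mod_cast hn
  have hanti : AntitoneOn (fun x : ℝ => phi (x / n)) (Set.Icc 0 (0 + n)) := by
    intro x hx y hy hxy
    rw [zero_add] at hx hy
    exact phi_antitone ⟨div_nonneg hx.1 hn'.le, (div_le_one hn').2 hx.2⟩
      ⟨div_nonneg hy.1 hn'.le, (div_le_one hn').2 hy.2⟩ (by gcongr)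
  have h1 := hanti.integral_le_sum
  have h2 := hanti.sum_le_integral
  simp only [zero_add] at h1 h2
  rw [phi_integral hn'] at h1 h2
  have h3 := Finset.sum_range_sub (fun j : ℕ => phi ((j : ℝ) / n)) n
  rw [Finset.sum_sub_distrib, div_self hn'.ne'] at h3
  have h4 : phi 1 = 0 := by simp [phi]
  have h5 : phi ((0 : ℕ) / (n : ℝ)) = 1 := by simp [phi]
  rw [h4, h5] at h3
  rw [abs_le]
  constructor <;> linarith

/-- The limiting weight `q(ℓ) = (ℓ₂² - ℓ₁²)² / |ℓ|⁶`, written as `c(ℓ, -ℓ)² / |ℓ|⁴` divided by `|ℓ|²`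
(and equal to `0` at `ℓ = 0`). -/
noncomputable def qd (l : ℤ × ℤ) : ℝ :=
  (((l.2 : ℝ) ^ 2 - (l.1 : ℝ) ^ 2) / ((l.1 : ℝ) ^ 2 + (l.2 : ℝ) ^ 2)) ^ 2
    / ((l.1 : ℝ) ^ 2 + (l.2 : ℝ) ^ 2)

open Finset in
/-- The four sides of the square `|ℓ|_∞ = n`, each containing exactly one of its end points, so that
the union is disjoint. -/
lemma box_eq (n : ℕ) (hn : 0 < n) : box (α := ℤ × ℤ) n =
    (((Ioc (-n : ℤ) n).image (fun j => ((n : ℤ), j)) ∪ (Ioc (-n : ℤ) n).image (fun j => (-j, (n : ℤ))))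
    ∪ (Ioc (-n : ℤ) n).image (fun j => (-(n : ℤ), -j)))
    ∪ (Ioc (-n : ℤ) n).image (fun j => (j, -(n : ℤ))) := by
  ext ⟨a, b⟩
  simp only [Int.mem_box, mem_union, mem_image, mem_Ioc, Prod.mk.injEq]
  constructor
  · intro h
    by_cases h1 : a = n ∧ -n < b
    · exact Or.inl (Or.inl (Or.inl ⟨b, by omega, by omega, rfl⟩))
    by_cases h2 : b = n ∧ a < n
    · exact Or.inl (Or.inl (Or.inr ⟨-a, by omega, by omega, by omega⟩))
    by_cases h3 : a = -n ∧ b < n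
    · exact Or.inl (Or.inr ⟨-b, by omega, by omega, by omega⟩)
    exact Or.inr ⟨a, by omega, rfl, by omega⟩
  · rintro (((⟨j, h⟩ | ⟨j, h⟩) | ⟨j, h⟩) | ⟨j, h⟩) <;> omega

open Finset in
lemma box_qd {n : ℕ} (hn : 0 < n) :
    ∑ l ∈ box n, qd l = 4 * ∑ j ∈ Ioc (-n : ℤ) n, qd ((n : ℤ), j) := by
  rw [box_eq n hn, sum_union, sum_union, sum_union, sum_image, sum_image, sum_image, sum_image]
  · have e1 : ∀ j : ℤ, qd (-j, n) = qd (n, j) := fun j => by simp only [qd]; push_cast; ring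
    have e2 : ∀ j : ℤ, qd (-(n : ℤ), -j) = qd (n, j) := fun j => by simp only [qd]; push_cast; ring
    have e3 : ∀ j : ℤ, qd (j, -(n : ℤ)) = qd (n, j) := fun j => by simp only [qd]; push_cast; ring
    simp only [e1, e2, e3]
    ring
  all_goals first
    | (intro x _ y _ h; simp only [Prod.mk.injEq] at h; omega)
    | (rw [Finset.disjoint_left]
       simp only [mem_union, mem_image, mem_Ioc, Prod.forall, Prod.mk.injEq]
       rintro a b h ⟨j, h'⟩
       rcases h with (⟨i, h⟩ | ⟨i, h⟩) | ⟨i, h⟩ <;> omega)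

open Finset in
/-- The mass of `qd` on a sup-norm sphere is `π / n` to leading order. -/
lemma box_weight {n : ℕ} (hn : 0 < n) :
    |∑ l ∈ box n, qd l - Real.pi / n| ≤ 12 / (n : ℝ) ^ 2 := by
  have hn' : (0 : ℝ) < n := by exact_mod_cast hn
  have q0 : qd ((n : ℤ), -(n : ℤ)) = 0 := by simp [qd]
  have q1 : qd ((n : ℤ), (0 : ℤ)) = 1 / (n : ℝ) ^ 2 := by
    simp only [qd]; push_cast; field_simp; ring
  have q2 : qd ((n : ℤ), (n : ℤ)) = 0 := by simp [qd]
  have q3 : ∀ j : ℕ, qd ((n : ℤ), (j : ℤ)) = phi (j / n) / n ^ 2 := by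
    intro j
    have : (0 : ℝ) < n ^ 2 + j ^ 2 := by positivity
    simp only [qd, phi]; push_cast; field_simp; ring
  have h1 : ∑ j ∈ Ioc (-n : ℤ) n, qd ((n : ℤ), j) = ∑ j ∈ Icc (-n : ℤ) n, qd ((n : ℤ), j) := by
    rw [← Finset.sum_Ioc_add_eq_sum_Icc (by omega), q0, add_zero]
  have h2 : ∑ j ∈ Icc (-n : ℤ) n, qd ((n : ℤ), j)
      = 2 * ∑ j ∈ range n, phi (j / n) / n ^ 2 - 1 / (n : ℝ) ^ 2 := by
    rw [Finset.sum_Icc_of_even_eq_range (f := fun j => qd ((n : ℤ), j))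
      (by intro j; simp [qd]), sum_range_succ]
    simp only [q1, q2, q3, nsmul_eq_mul]
    push_cast; ring
  rw [box_qd hn, h1, h2, ← Finset.sum_div]
  have h3 := phi_sum hn
  set S := ∑ j ∈ range n, phi (j / n)
  have : 4 * (2 * (S / (n : ℝ) ^ 2) - 1 / (n : ℝ) ^ 2) - Real.pi / n
    = (8 * (S - n * (Real.pi / 8)) - 4) / (n : ℝ) ^ 2 := by field_simp; ring
  rw [this, abs_div, abs_of_pos (by positivity : (0 : ℝ) < (n : ℝ) ^ 2)]
  gcongr
  rw [abs_le] at h3 ⊢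
  constructor <;> linarith

/-! ### The logarithmic scale and the Riemann sum -/

lemma LN_eq (c : ℝ) (N : ℕ) (x : ℝ) :
    LN c N x = c / (2 * Real.log N) * Real.log (1 + (N : ℝ) ^ 2 / x) := by
  rw [LN, Real.log_pow]; push_cast; rfl

lemma half_le_log {N : ℕ} (hN : 2 ≤ N) : 1 / 2 ≤ Real.log N := by
  have h : (2 : ℝ) ≤ N := by exact_mod_cast hN
  have := Real.log_le_log (by norm_num) h
  linarith [Real.log_two_gt_d9]

lemma LN_mem {c : ℝ} (hc : 0 ≤ c) {N : ℕ} (hN : 2 ≤ N) {x : ℝ} (hx : 1 / 2 ≤ x) :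
    LN c N x ∈ Set.Icc 0 (2 * c) := by
  have hlog := half_le_log hN
  have h2 : (2 : ℝ) ≤ N := by exact_mod_cast hN
  have hx0 : 0 < x := by linarith
  rw [LN_eq]
  constructor
  · have : 0 ≤ Real.log (1 + (N : ℝ) ^ 2 / x) := by
      apply Real.log_nonneg
      linarith [show 0 ≤ (N : ℝ) ^ 2 / x by positivity]
    positivity
  · have h1 : Real.log (1 + (N : ℝ) ^ 2 / x) ≤ 4 * Real.log N := by
      have : (4 : ℝ) * Real.log N = Real.log ((N : ℝ) ^ 4) := by rw [Real.log_pow]; norm_num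
      rw [this]
      apply Real.log_le_log (by positivity)
      have h3 : (N : ℝ) ^ 2 / x ≤ 2 * (N : ℝ) ^ 2 := by
        rw [div_le_iff₀ hx0]; nlinarith [sq_nonneg (N : ℝ)]
      have h4 : (4 : ℝ) ≤ (N : ℝ) ^ 2 := by nlinarith
      nlinarith
    calc c / (2 * Real.log N) * Real.log (1 + (N : ℝ) ^ 2 / x)
        ≤ c / (2 * Real.log N) * (4 * Real.log N) := by gcongr
      _ = 2 * c := by field_simp; ring

lemma LN_le {c : ℝ} (hc : 0 ≤ c) {N : ℕ} (hN : 2 ≤ N) {x : ℝ} (hx : (N : ℝ) ^ 2 / 2 ≤ x) :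
    LN c N x ≤ c / Real.log N := by
  have hlog := half_le_log hN
  have h2 : (2 : ℝ) ≤ N := by exact_mod_cast hN
  have hx0 : 0 < x := lt_of_lt_of_le (by positivity) hx
  rw [LN_eq]
  have h3 : (N : ℝ) ^ 2 / x ≤ 2 := by rw [div_le_iff₀ hx0]; linarith
  have h1 : Real.log (1 + (N : ℝ) ^ 2 / x) ≤ 2 := by
    have := Real.log_le_sub_one_of_pos (show 0 < 1 + (N : ℝ) ^ 2 / x by positivity)
    linarith
  calc c / (2 * Real.log N) * Real.log (1 + (N : ℝ) ^ 2 / x)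
      ≤ c / (2 * Real.log N) * 2 := by gcongr
    _ = _ := by field_simp

/-- Changing the argument by a bounded factor changes `LN` by `O(1 / log N)`. -/
lemma LN_sub_le {c : ℝ} (hc : 0 ≤ c) {N : ℕ} (hN : 2 ≤ N) {x y : ℝ} (hx : 0 < x) (hy : 0 < y)
    (hxy : x ≤ 8 * y) (hyx : y ≤ 8 * x) :
    |LN c N x - LN c N y| ≤ 2 * c / Real.log N := by
  have hlog := half_le_log hN
  have h8 : Real.log 8 ≤ 4 := by
    have : Real.log 8 = 3 * Real.log 2 := by
      rw [show (8 : ℝ) = 2 ^ 3 by norm_num, Real.log_pow]; norm_num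
    linarith [Real.log_two_lt_d9]
  have key : ∀ u v : ℝ, 0 < u → 0 < v → u ≤ 8 * v →
      Real.log (1 + (N : ℝ) ^ 2 / v) ≤ 4 + Real.log (1 + (N : ℝ) ^ 2 / u) := by
    intro u v hu hv huv
    have h0 : (N : ℝ) ^ 2 / v ≤ 8 * ((N : ℝ) ^ 2 / u) := by
      rw [← mul_div_assoc, div_le_div_iff₀ hv hu]
      nlinarith [sq_nonneg (N : ℝ)]
    have h1 : Real.log (1 + (N : ℝ) ^ 2 / v) ≤ Real.log (8 * (1 + (N : ℝ) ^ 2 / u)) :=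
      Real.log_le_log (by positivity) (by linarith)
    rw [Real.log_mul (by norm_num) (by positivity)] at h1
    linarith
  have h1 := key x y hx hy hxy
  have h2 := key y x hy hx hyx
  rw [LN_eq, LN_eq, ← mul_sub, abs_mul, abs_of_nonneg (by positivity : 0 ≤ c / (2 * Real.log N))]
  calc _ ≤ c / (2 * Real.log N) * 4 := by
        gcongr
        rw [abs_le]; constructor <;> linarith
    _ = _ := by field_simp; ring

/-- The increments `D` of `log (1 + N² / (A + n²))` are `2 (n + 1) / (A + (n + 1)²)` up to an error
whose sum over `n < N` is bounded. -/
lemma log_step {A : ℝ} (hA : 1 / 2 ≤ A) {N : ℕ} (hN : 2 ≤ N) (n : ℕ) {D : ℝ}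
    (hD : D = Real.log (1 + (N : ℝ) ^ 2 / (A + (n : ℝ) ^ 2))
      - Real.log (1 + (N : ℝ) ^ 2 / (A + ((n : ℝ) + 1) ^ 2))) :
    0 ≤ D ∧ D ≤ 6 / ((n : ℝ) + 1) ∧
    |D - 2 * (((n : ℝ) + 1) / (A + ((n : ℝ) + 1) ^ 2))|
      ≤ 13 * (1 / ((n : ℝ) + 1) ^ 2) + 2 * (((n : ℝ) + 1) / (N : ℝ) ^ 2) := by
  have h2 : (2 : ℝ) ≤ N := by exact_mod_cast hN
  have hn : (0 : ℝ) ≤ n := Nat.cast_nonneg n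
  have ha : ((n : ℝ) + 1) ^ 2 / 3 ≤ A + (n : ℝ) ^ 2 := by nlinarith [sq_nonneg (2 * (n : ℝ) - 1)]
  have hb : ((n : ℝ) + 1) ^ 2 ≤ A + ((n : ℝ) + 1) ^ 2 := by linarith
  have hba : A + ((n : ℝ) + 1) ^ 2 - (A + (n : ℝ) ^ 2) = 2 * n + 1 := by ring
  set a := A + (n : ℝ) ^ 2
  set b := A + ((n : ℝ) + 1) ^ 2
  have ha0 : 0 < a := by positivity
  have hb0 : 0 < b := by positivity
  have hab : a ≤ b := by linarith
  set M := (N : ℝ) ^ 2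
  have hM : 0 < M := by positivity
  have lem : ∀ x y : ℝ, 0 < x → 0 < y → (y - x) / y ≤ Real.log y - Real.log x ∧
      Real.log y - Real.log x ≤ (y - x) / x := by
    intro x y hx hy
    rw [← Real.log_div hy.ne' hx.ne']
    have e1 := Real.log_le_sub_one_of_pos (div_pos hy hx)
    have e2 := Real.one_sub_inv_le_log_of_pos (div_pos hy hx)
    constructor
    · refine le_trans (le_of_eq ?_) e2
      field_simp
    · refine e1.trans (le_of_eq ?_)
      field_simp
  have hDeq : D = (Real.log b - Real.log a) - (Real.log (b + M) - Real.log (a + M)) := by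
    rw [hD, show 1 + M / a = (a + M) / a by field_simp, show 1 + M / b = (b + M) / b by field_simp,
      Real.log_div (by positivity) ha0.ne', Real.log_div (by positivity) hb0.ne']
    ring
  obtain ⟨l1, l2⟩ := lem a b ha0 hb0
  obtain ⟨l3, l4⟩ := lem (a + M) (b + M) (by positivity) (by positivity)
  rw [show b + M - (a + M) = 2 * (n : ℝ) + 1 by linarith] at l3 l4
  rw [hba] at l1 l2
  have p3 : 0 ≤ (2 * (n : ℝ) + 1) / (b + M) := by positivity
  have p4 : (2 * (n : ℝ) + 1) / (a + M) ≤ 2 * (((n : ℝ) + 1) / M) := by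
    rw [← mul_div_assoc]
    gcongr <;> linarith
  have p1 : 1 / b ≤ 1 / ((n : ℝ) + 1) ^ 2 := by gcongr
  refine ⟨?_, ?_, ?_⟩
  · rw [hD, sub_nonneg]
    apply Real.log_le_log (by positivity)
    gcongr
  · have : (2 * (n : ℝ) + 1) / a ≤ 6 / ((n : ℝ) + 1) := by
      rw [div_le_div_iff₀ ha0 (by positivity)]
      nlinarith
    linarith
  · have e1 : (2 * (n : ℝ) + 1) / b = 2 * (((n : ℝ) + 1) / b) - 1 / b := by field_simp; ring
    have e2 : (2 * (n : ℝ) + 1) / a - (2 * (n : ℝ) + 1) / b ≤ 12 * (1 / ((n : ℝ) + 1) ^ 2) := by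
      have : (2 * (n : ℝ) + 1) / a - (2 * (n : ℝ) + 1) / b = (2 * (n : ℝ) + 1) ^ 2 / (a * b) := by
        rw [← hba]; field_simp
      rw [this]
      calc (2 * (n : ℝ) + 1) ^ 2 / (a * b)
          ≤ (2 * ((n : ℝ) + 1)) ^ 2 / ((((n : ℝ) + 1) ^ 2 / 3) * ((n : ℝ) + 1) ^ 2) := by
            gcongr; linarith
        _ = _ := by field_simp; norm_num
    have p0 : 0 ≤ 1 / ((n : ℝ) + 1) ^ 2 := by positivity
    have p5 : 0 ≤ 1 / b := by positivity
    have p6 : 0 ≤ ((n : ℝ) + 1) / M := by positivity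
    rw [abs_le]
    constructor <;> linarith

/-- For bounded Lipschitz `h`, the sum over `n` is a Riemann sum of `∫₀^{L A} h` along the partition
`L (A + n²)`, `0 ≤ n ≤ N`; the piece below `L (A + N²)` is `O(1 / log N)`. -/
lemma riemann_log {c M Λ A : ℝ} (hc : 0 ≤ c) (hM : 0 ≤ M) (hΛ : 0 ≤ Λ) (hA : 1 / 2 ≤ A)
    {h : ℝ → ℝ} (hb : ∀ y ∈ Set.Icc 0 (2 * c), |h y| ≤ M)
    (hl : ∀ x ∈ Set.Icc 0 (2 * c), ∀ y ∈ Set.Icc 0 (2 * c), |h x - h y| ≤ Λ * |x - y|)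
    {N : ℕ} (hN : 2 ≤ N) :
    |c / Real.log N * ∑ n ∈ Finset.range N, h (LN c N (A + ((n : ℝ) + 1) ^ 2)) *
        (((n : ℝ) + 1) / (A + ((n : ℝ) + 1) ^ 2)) - ∫ y in (0 : ℝ)..LN c N A, h y|
      ≤ (15 * c * M + 36 * Λ * c ^ 2) / Real.log N := by
  have hlog := half_le_log hN
  have hlog0 : 0 < Real.log N := by linarith
  have h2 : (2 : ℝ) ≤ N := by exact_mod_cast hN
  have hcont : ContinuousOn h (Set.Icc 0 (2 * c)) := by
    apply LipschitzOnWith.continuousOn (K := ⟨Λ, hΛ⟩)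
    apply LipschitzOnWith.of_dist_le_mul
    intro x hx y hy
    exact hl x hx y hy
  set y : ℕ → ℝ := fun n => LN c N (A + (n : ℝ) ^ 2) with hy
  have hymem : ∀ n, y n ∈ Set.Icc 0 (2 * c) := fun n => LN_mem hc hN (by nlinarith [sq_nonneg (n : ℝ)])
  have hsub : ∀ u ∈ Set.Icc 0 (2 * c), ∀ v ∈ Set.Icc 0 (2 * c), Set.uIcc u v ⊆ Set.Icc 0 (2 * c) :=
    fun u hu v hv => Set.uIcc_subset_Icc hu hv
  have hintv : ∀ u ∈ Set.Icc 0 (2 * c), ∀ v ∈ Set.Icc 0 (2 * c),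
      IntervalIntegrable h MeasureTheory.volume u v := fun u hu v hv =>
    (hcont.mono (hsub u hu v hv)).intervalIntegrable
  have h0mem : (0 : ℝ) ∈ Set.Icc 0 (2 * c) := ⟨le_rfl, by linarith⟩
  have hy0 : y 0 = LN c N A := by simp [hy]
  have hyN : y N ≤ c / Real.log N := LN_le hc hN (by nlinarith [sq_nonneg (N : ℝ)])
  have split : ∫ t in (0 : ℝ)..LN c N A, h t
      = (∫ t in (0 : ℝ)..y N, h t) + ∑ n ∈ Finset.range N, ∫ t in (y (n + 1))..(y n), h t := by
    have e := intervalIntegral.sum_integral_adjacent_intervals (f := h) (a := y) (n := N)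
      (μ := MeasureTheory.volume) (fun k _ => hintv _ (hymem _) _ (hymem _))
    have e' : ∑ n ∈ Finset.range N, ∫ t in (y (n + 1))..(y n), h t = ∫ t in (y N)..(y 0), h t := by
      rw [intervalIntegral.integral_symm (y 0), ← e, ← Finset.sum_neg_distrib]
      exact Finset.sum_congr rfl fun n _ => intervalIntegral.integral_symm _ _
    rw [e', ← hy0, intervalIntegral.integral_add_adjacent_intervals
      (hintv _ h0mem _ (hymem _)) (hintv _ (hymem _) _ (hymem _))]
  have tail : |∫ t in (0 : ℝ)..y N, h t| ≤ c * M / Real.log N := by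
    have := intervalIntegral.norm_integral_le_of_norm_le_const (a := 0) (b := y N) (f := h) (C := M)
      (fun x hx => hb x (hsub _ h0mem _ (hymem N) (Set.uIoc_subset_uIcc hx)))
    rw [Real.norm_eq_abs, sub_zero, abs_of_nonneg (hymem N).1] at this
    calc _ ≤ M * y N := this
      _ ≤ M * (c / Real.log N) := by gcongr
      _ = _ := by ring
  have step : ∀ n : ℕ, |c / Real.log N * (h (LN c N (A + ((n : ℝ) + 1) ^ 2)) *
        (((n : ℝ) + 1) / (A + ((n : ℝ) + 1) ^ 2))) - ∫ t in (y (n + 1))..(y n), h t| ≤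
      c * M / (2 * Real.log N) * (13 * (1 / ((n : ℝ) + 1) ^ 2) + 2 * (((n : ℝ) + 1) / (N : ℝ) ^ 2))
      + 18 * Λ * c ^ 2 / Real.log N * (1 / ((n : ℝ) + 1) ^ 2) := by
    intro n
    have hys : LN c N (A + ((n : ℝ) + 1) ^ 2) = y (n + 1) := by simp [hy]
    obtain ⟨d1, d2, d3⟩ := log_step hA hN n rfl
    have hdiff : y n - y (n + 1) = c / (2 * Real.log N) *
        (Real.log (1 + (N : ℝ) ^ 2 / (A + (n : ℝ) ^ 2))
          - Real.log (1 + (N : ℝ) ^ 2 / (A + ((n : ℝ) + 1) ^ 2))) := by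
      simp only [hy, LN_eq]; push_cast; ring
    rw [hys]
    set D := Real.log (1 + (N : ℝ) ^ 2 / (A + (n : ℝ) ^ 2))
          - Real.log (1 + (N : ℝ) ^ 2 / (A + ((n : ℝ) + 1) ^ 2))
    have hdn : 0 ≤ y n - y (n + 1) := by rw [hdiff]; positivity
    -- Riemann error on one interval of the partition
    have i1 : |(∫ t in (y (n + 1))..(y n), h t) - h (y (n + 1)) * (y n - y (n + 1))|
        ≤ Λ * (y n - y (n + 1)) ^ 2 := by
      have e : (∫ t in (y (n + 1))..(y n), h t) - h (y (n + 1)) * (y n - y (n + 1))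
          = ∫ t in (y (n + 1))..(y n), (h t - h (y (n + 1))) := by
        rw [intervalIntegral.integral_sub (hintv _ (hymem _) _ (hymem _)) (by simp),
          intervalIntegral.integral_const, smul_eq_mul]
        ring
      rw [e]
      have := intervalIntegral.norm_integral_le_of_norm_le_const (a := y (n + 1)) (b := y n)
        (f := fun t => h t - h (y (n + 1))) (C := Λ * (y n - y (n + 1))) (fun x hx => by
          have hx' := Set.uIoc_subset_uIcc hx
          refine (hl x (hsub _ (hymem _) _ (hymem _) hx') _ (hymem _)).trans ?_
          rw [Set.uIcc_of_le (by linarith)] at hx'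
          have := hx'.1
          have := hx'.2
          gcongr
          rw [abs_of_nonneg (by linarith)]
          linarith)
      rw [Real.norm_eq_abs, abs_of_nonneg hdn] at this
      linarith
    have i2 : Λ * (y n - y (n + 1)) ^ 2 ≤ 18 * Λ * c ^ 2 / Real.log N * (1 / ((n : ℝ) + 1) ^ 2) := by
      rw [hdiff]
      calc Λ * (c / (2 * Real.log N) * D) ^ 2
          ≤ Λ * (c / (2 * Real.log N) * (6 / ((n : ℝ) + 1))) ^ 2 := by gcongr
        _ = (9 * Λ * c ^ 2 / Real.log N * (1 / ((n : ℝ) + 1) ^ 2)) * (1 / Real.log N) := by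
            field_simp; ring
        _ ≤ (9 * Λ * c ^ 2 / Real.log N * (1 / ((n : ℝ) + 1) ^ 2)) * 2 := by
            gcongr
            rw [div_le_iff₀ hlog0]; linarith
        _ = _ := by ring
    -- error from replacing the mesh by its leading term
    have i3 : |c / Real.log N * (h (y (n + 1)) * (((n : ℝ) + 1) / (A + ((n : ℝ) + 1) ^ 2)))
        - h (y (n + 1)) * (y n - y (n + 1))| ≤ c * M / (2 * Real.log N) *
          (13 * (1 / ((n : ℝ) + 1) ^ 2) + 2 * (((n : ℝ) + 1) / (N : ℝ) ^ 2)) := by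
      have e : c / Real.log N * (h (y (n + 1)) * (((n : ℝ) + 1) / (A + ((n : ℝ) + 1) ^ 2)))
        - h (y (n + 1)) * (y n - y (n + 1)) = - (c * h (y (n + 1)) / (2 * Real.log N) *
          (D - 2 * (((n : ℝ) + 1) / (A + ((n : ℝ) + 1) ^ 2)))) := by
        rw [hdiff]; field_simp; ring
      rw [e, abs_neg, abs_mul, abs_div, abs_mul, abs_of_nonneg hc,
        abs_of_pos (by positivity : 0 < 2 * Real.log N)]
      have := hb _ (hymem (n + 1))
      gcongr
    rw [abs_le] at *
    constructor <;> linarith [i1.1, i1.2, i3.1, i3.2]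
  have s1 := sum_inv_sq_le N
  have s2 := sum_lin_le (N := N) (by omega)
  rw [split, Finset.mul_sum]
  have total : |∑ n ∈ Finset.range N, c / Real.log N * (h (LN c N (A + ((n : ℝ) + 1) ^ 2)) *
        (((n : ℝ) + 1) / (A + ((n : ℝ) + 1) ^ 2)))
        - ∑ n ∈ Finset.range N, ∫ t in (y (n + 1))..(y n), h t| ≤
      c * M / (2 * Real.log N) * (13 * 2 + 2 * 1) + 18 * Λ * c ^ 2 / Real.log N * 2 := by
    rw [← Finset.sum_sub_distrib]
    refine (Finset.abs_sum_le_sum_abs _ _).trans ((Finset.sum_le_sum fun n _ => step n).trans ?_)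
    rw [Finset.sum_add_distrib, ← Finset.mul_sum, ← Finset.mul_sum, Finset.sum_add_distrib,
      ← Finset.mul_sum, ← Finset.mul_sum]
    gcongr
  have fin : (15 * c * M + 36 * Λ * c ^ 2) / Real.log N = c * M / Real.log N +
      (c * M / (2 * Real.log N) * (13 * 2 + 2 * 1) + 18 * Λ * c ^ 2 / Real.log N * 2) := by
    field_simp; ring
  rw [fin]
  rw [abs_le] at *
  constructor <;> linarith [tail.1, tail.2]

/-! ### The summand against its model -/

lemma one_le_nsq {l : ℤ × ℤ} (hl : l ≠ 0) : 1 ≤ nsq l := by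
  have : 0 < l.1 ^ 2 + l.2 ^ 2 := by
    by_contra hcon
    apply hl
    have h1 : l.1 = 0 := by nlinarith [sq_nonneg l.1, sq_nonneg l.2]
    have h2 : l.2 = 0 := by nlinarith [sq_nonneg l.1, sq_nonneg l.2]
    exact Prod.ext h1 h2
  have h : (1 : ℤ) ≤ l.1 ^ 2 + l.2 ^ 2 := this
  unfold nsq
  exact_mod_cast h

lemma rnsq_latR (l : ℤ × ℤ) : rnsq (latR l) = nsq l := rfl

lemma latR_ne_zero {l : ℤ × ℤ} (hl : l ≠ 0) : latR l ≠ 0 := by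
  intro h
  apply hl
  simp only [latR, Prod.mk_eq_zero, Int.cast_eq_zero] at h
  exact Prod.ext h.1 h.2

lemma latR_add_sub (k l : ℤ × ℤ) : latR l + latR (k - l) = latR k := by
  simp [latR]

lemma sqrt_le_nat {x : ℝ} {N : ℕ} : √x ≤ N ↔ x ≤ (N : ℝ) ^ 2 :=
  Real.sqrt_le_left (Nat.cast_nonneg N)

lemma Kker_eq_zero_of_k {N : ℕ} {k : ℤ × ℤ} (hk : (N : ℝ) ^ 2 < nsq k) (l : ℤ × ℤ) :
    Kker N (latR l) (latR (k - l)) = 0 := by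
  rw [Kker, if_neg]
  rintro ⟨-, -, -, -, -, -, h⟩
  rw [latR_add_sub, rnsq_latR, sqrt_le_nat] at h
  linarith

lemma Kker_eq_zero_of_l {N : ℕ} {l : ℤ × ℤ} (hl : (N : ℝ) ^ 2 < nsq l) (k : ℤ × ℤ) :
    Kker N (latR l) (latR (k - l)) = 0 := by
  rw [Kker, if_neg]
  rintro ⟨-, -, -, h, -⟩
  rw [rnsq_latR, sqrt_le_nat] at h
  linarith

/-- Either one of the cutoffs on `ℓ` and `k - ℓ` makes the kernel vanish, or the kernel is given by
its formula; the cutoff on `|ℓ + m| = |k|` is satisfied by assumption. -/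
lemma Kker_cases {N : ℕ} {k l : ℤ × ℤ} (hl : l ≠ 0) (hk : nsq k ≤ (N : ℝ) ^ 2) :
    (Kker N (latR l) (latR (k - l)) = 0 ∧
      (l = k ∨ (N : ℝ) ^ 2 < nsq l ∨ (N : ℝ) ^ 2 < nsq (k - l))) ∨
    (l ≠ k ∧ 4 * Real.pi ^ 2 * (Kker N (latR l) (latR (k - l))) ^ 2 =
      (((l.2 : ℝ) * ((k.2 : ℝ) - l.2) - (l.1 : ℝ) * ((k.1 : ℝ) - l.1)) /
        (√((l.1 : ℝ) ^ 2 + (l.2 : ℝ) ^ 2) *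
          √(((k.1 : ℝ) - l.1) ^ 2 + ((k.2 : ℝ) - l.2) ^ 2))) ^ 2) := by
  rw [Kker]
  by_cases h1 : l = k
  · left
    refine ⟨if_neg ?_, Or.inl h1⟩
    rintro ⟨-, h, -⟩
    apply h
    simp [h1, latR]
  by_cases h2 : (N : ℝ) ^ 2 < nsq l
  · left
    refine ⟨if_neg ?_, Or.inr (Or.inl h2)⟩
    rintro ⟨-, -, -, h, -⟩
    rw [rnsq_latR, sqrt_le_nat] at h
    linarith
  by_cases h3 : (N : ℝ) ^ 2 < nsq (k - l)
  · left
    refine ⟨if_neg ?_, Or.inr (Or.inr h3)⟩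
    rintro ⟨-, -, -, -, -, h, -⟩
    rw [rnsq_latR, sqrt_le_nat] at h
    linarith
  right
  have hkl : k - l ≠ 0 := sub_ne_zero.2 (Ne.symm h1)
  refine ⟨h1, ?_⟩
  rw [if_pos]
  · simp only [cfun, latR, rnsq, Prod.fst_sub, Prod.snd_sub]
    push_cast
    rw [mul_pow]
    field_simp
    ring
  · refine ⟨latR_ne_zero hl, latR_ne_zero hkl, ?_, ?_, ?_, ?_, ?_⟩
    · rw [rnsq_latR]; exact Real.one_le_sqrt.2 (one_le_nsq hl)
    · rw [rnsq_latR, sqrt_le_nat]; linarith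
    · rw [rnsq_latR]; exact Real.one_le_sqrt.2 (one_le_nsq hkl)
    · rw [rnsq_latR, sqrt_le_nat]; linarith
    · rw [latR_add_sub, rnsq_latR, sqrt_le_nat]; exact hk

/-- The summand at `ℓ = l`, `m = k - l`, where `k` is `k₁` and `S = |k₁|² + ⋯ + |k_n|²`. -/
noncomputable def summand (H Hp : ℝ → ℝ) (c : ℝ) (N : ℕ) (μ S : ℝ) (k l : ℤ × ℤ) : ℝ :=
  (Kker N (latR l) (latR (k - l))) ^ 2 *
    ((μ + Efun (S - nsq k) l (k - l) * Hp (LN c N (μ + Efun (S - nsq k) l (k - l)))) /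
      (μ + Efun (S - nsq k) l (k - l) * H (LN c N (μ + Efun (S - nsq k) l (k - l)))) ^ 2)

/-- The model for `4π²` times the summand on the sphere `|l|_∞ = n`: apart from the weight `qd l` it
depends on `n` only. -/
noncomputable def modelTerm (h : ℝ → ℝ) (c : ℝ) (N : ℕ) (A : ℝ) (n : ℕ) (l : ℤ × ℤ) : ℝ :=
  h (LN c N (A + (n : ℝ) ^ 2)) * ((n : ℝ) ^ 2 / (A + (n : ℝ) ^ 2)) * qd l

set_option maxHeartbeats 1000000 in
/-- On the sphere `|l|_∞ = n` the summand is close to its model; the four error terms are summable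
by `error_sum`. -/
lemma pointwise {c K μ S : ℝ} (hc : 0 ≤ c) (hK : 1 ≤ K) (hμ : 0 ≤ μ) {H Hp : ℝ → ℝ}
    (hH : ∀ y ∈ Set.Icc 0 (2 * c), 1 ≤ H y ∧ H y ≤ K)
    (hHp : ∀ y ∈ Set.Icc 0 (2 * c), 0 ≤ Hp y ∧ Hp y ≤ K)
    (hb : ∀ y ∈ Set.Icc 0 (2 * c), |Hp y / H y ^ 2| ≤ K)
    (hl : ∀ x ∈ Set.Icc 0 (2 * c), ∀ y ∈ Set.Icc 0 (2 * c),
      |Hp x / H x ^ 2 - Hp y / H y ^ 2| ≤ 3 * K ^ 2 * |x - y|)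
    {N : ℕ} (hN : 2 ≤ N) {k l : ℤ × ℤ} (hk0 : k ≠ 0) (hkS : nsq k ≤ S)
    (hkN : nsq k ≤ (N : ℝ) ^ 2) {n : ℕ} (hn : 0 < n) (hln : l ∈ Finset.box (α := ℤ × ℤ) n) :
    |4 * Real.pi ^ 2 * summand H Hp c N μ S k l
        - modelTerm (fun y => Hp y / H y ^ 2) c N (μ + S / 2) n l| ≤
      (105 * K ^ 3 + 24 * K ^ 2 * c) * (√(μ + S / 2) / (n * (μ + S / 2 + (n : ℝ) ^ 2))
        + 1 / (N : ℝ) ^ 2 + (if l = k then 1 else 0) + 1 / ((n : ℝ) ^ 2 * Real.log N)) := by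
  have hlog := half_le_log hN
  have hlog0 : 0 < Real.log N := by linarith
  have h2 : (2 : ℝ) ≤ N := by exact_mod_cast hN
  have hn0 : (0 : ℝ) < n := by exact_mod_cast hn
  have hn1 : (1 : ℝ) ≤ n := by exact_mod_cast hn
  have hl0 : l ≠ 0 := by
    rintro rfl
    have := Finset.zero_mem_box.1 hln
    omega
  obtain ⟨hr1, hr2⟩ := box_bounds hln
  have hk1 := one_le_nsq hk0
  have hl1 := one_le_nsq hl0
  set A := μ + S / 2 with hA
  have hA0 : 1 / 2 ≤ A := by linarith
  have hAp : 0 < A := by linarith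
  set r := √((l.1 : ℝ) ^ 2 + (l.2 : ℝ) ^ 2) with hr
  set κ := √((k.1 : ℝ) ^ 2 + (k.2 : ℝ) ^ 2) with hκ
  have hrsq : r ^ 2 = (l.1 : ℝ) ^ 2 + (l.2 : ℝ) ^ 2 := Real.sq_sqrt (by positivity)
  have hκsq : κ ^ 2 = (k.1 : ℝ) ^ 2 + (k.2 : ℝ) ^ 2 := Real.sq_sqrt (by positivity)
  have hr0 : 0 ≤ r := Real.sqrt_nonneg _
  have hκ0 : 0 ≤ κ := Real.sqrt_nonneg _
  have hκA : κ ^ 2 ≤ 2 * A := by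
    rw [hκsq]; unfold nsq at hkS; linarith
  set d := (l.1 : ℝ) * k.1 + (l.2 : ℝ) * k.2 with hd
  have hdle : |d| ≤ r * κ := cs2 _ _ _ _
  rw [← hrsq] at hr1 hr2
  have hrn : (n : ℝ) ≤ r := (abs_le_of_sq_le_sq' hr1 hr0).2
  have hrp : 0 < r := by linarith
  obtain ⟨hX4, hX8, hinv⟩ := inv_err hAp hn0 hr0 hr1 hr2 hκA hdle
  have hs := Real.sqrt_pos.2 hAp
  have hs2 := Real.sq_sqrt hAp.le
  set s := √A with hsdef
  set Y := A + (n : ℝ) ^ 2 with hY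
  have hY0 : 0 < Y := by positivity
  have hnY : (n : ℝ) ^ 2 ≤ Y := by linarith
  have hqd : qd l = (((l.2 : ℝ) ^ 2 - (l.1 : ℝ) ^ 2) / ((l.1 : ℝ) ^ 2 + (l.2 : ℝ) ^ 2)) ^ 2 / r ^ 2 := by
    rw [hrsq]; rfl
  have hw0 := weight_le_one (l.1 : ℝ) l.2 (-l.1) (-l.2)
  have hw0' : (((l.2 : ℝ) ^ 2 - (l.1 : ℝ) ^ 2) / ((l.1 : ℝ) ^ 2 + (l.2 : ℝ) ^ 2)) ^ 2 ≤ 1 := by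
    refine le_trans (le_of_eq ?_) hw0
    rw [neg_sq, neg_sq, Real.mul_self_sqrt (by positivity)]
    ring
  set w0 := (((l.2 : ℝ) ^ 2 - (l.1 : ℝ) ^ 2) / ((l.1 : ℝ) ^ 2 + (l.2 : ℝ) ^ 2)) ^ 2 with hw0def
  have hw0n : 0 ≤ w0 := sq_nonneg _
  have hLY := LN_mem hc hN (show 1 / 2 ≤ Y by linarith [sq_nonneg (n : ℝ)])
  have hbY := hb _ hLY
  have hmodel : modelTerm (fun y => Hp y / H y ^ 2) c N A n l =
      w0 * (Hp (LN c N Y) / H (LN c N Y) ^ 2 * ((n : ℝ) ^ 2 / (Y * r ^ 2))) := by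
    rw [modelTerm, hqd, ← hY]; field_simp
  rw [hmodel]
  set e1 := s / (n * Y) with he1
  have he1n : 0 ≤ e1 := by positivity
  have hC : 0 ≤ 105 * K ^ 3 + 24 * K ^ 2 * c := by positivity
  have he4 : 0 ≤ 1 / ((n : ℝ) ^ 2 * Real.log N) := by positivity
  have he2 : 0 ≤ 1 / (N : ℝ) ^ 2 := by positivity
  have hK3 : K ≤ K ^ 3 := le_self_pow₀ hK (by norm_num)
  rcases Kker_cases (N := N) hl0 hkN with ⟨hz, hcase⟩ | ⟨hlk, hw⟩
  · -- off the support of the kernel only the model term remains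
    rw [summand, hz, zero_pow two_ne_zero, zero_mul, mul_zero, zero_sub, abs_neg]
    have hfrac : (n : ℝ) ^ 2 / (Y * r ^ 2) ≤ 1 / Y := by
      rw [div_le_div_iff₀ (by positivity) hY0]
      have := mul_le_mul_of_nonneg_left hr1 hY0.le
      linarith
    have hM : |w0 * (Hp (LN c N Y) / H (LN c N Y) ^ 2 * ((n : ℝ) ^ 2 / (Y * r ^ 2)))|
        ≤ K * (1 / Y) := by
      rw [abs_mul, abs_mul,
        abs_of_nonneg hw0n, abs_of_nonneg (by positivity : 0 ≤ (n : ℝ) ^ 2 / (Y * r ^ 2))]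
      calc _ ≤ 1 * (K * (1 / Y)) := by gcongr
        _ = _ := by ring
    refine hM.trans ?_
    by_cases hlk : l = k
    · rw [if_pos hlk]
      have : 1 / Y ≤ 1 := by rw [div_le_one hY0]; linarith [one_le_pow₀ hn1 (n := 2)]
      calc K * (1 / Y) ≤ (105 * K ^ 3 + 24 * K ^ 2 * c) * 1 := by
            have : K * (1 / Y) ≤ K * 1 := by gcongr
            have : 0 ≤ K ^ 2 * c := by positivity
            have : 0 ≤ K ^ 3 := by positivity
            linarith
        _ ≤ _ := mul_le_mul_of_nonneg_left (by linarith) hC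
    · rw [if_neg hlk]
      have hNY : (N : ℝ) ^ 2 ≤ 6 * Y := by
        rcases hcase with h | h | h
        · exact absurd h hlk
        · rw [nsq, ← hrsq] at h; linarith
        · have e : nsq (k - l) = κ ^ 2 + r ^ 2 - 2 * d := by
            rw [hκsq, hrsq, hd]; simp only [nsq, Prod.fst_sub, Prod.snd_sub]; push_cast; ring
          rw [e] at h
          have := (abs_le.1 hdle).1
          linarith [sq_nonneg (κ - r), sub_sq κ r, sq_nonneg κ, sq_nonneg r]
      have : 1 / Y ≤ 6 * (1 / (N : ℝ) ^ 2) := by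
        rw [← mul_div_assoc, div_le_div_iff₀ hY0 (by positivity)]; linarith
      calc K * (1 / Y) ≤ K * (6 * (1 / (N : ℝ) ^ 2)) := by gcongr
        _ = (6 * K) * (1 / (N : ℝ) ^ 2) := by ring
        _ ≤ (105 * K ^ 3 + 24 * K ^ 2 * c) * (1 / (N : ℝ) ^ 2) := by
            gcongr
            have : 0 ≤ K ^ 2 * c := by positivity
            linarith
        _ ≤ _ := mul_le_mul_of_nonneg_left (by linarith) hC
  · rw [if_neg hlk, summand]
    set E := Efun (S - nsq k) l (k - l) with hE
    have hEX : μ + E = A + r ^ 2 - d := by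
      rw [hE, hA, hrsq, hd]; simp only [Efun, nsq, Prod.fst_sub, Prod.snd_sub]; push_cast; ring
    have hEp : 1 / 2 ≤ E := by
      have h1 : 0 ≤ nsq (k - l) := by unfold nsq; positivity
      rw [hE, Efun]; linarith
    rw [← hEX] at hX4 hX8 hinv
    have hm : 0 < ((k.1 : ℝ) - l.1) ^ 2 + ((k.2 : ℝ) - l.2) ^ 2 := by
      have := one_le_nsq (sub_ne_zero.2 (Ne.symm hlk))
      simp only [nsq, Prod.fst_sub, Prod.snd_sub] at this
      push_cast at this
      linarith
    have hwerr := weight_err (l.1 : ℝ) l.2 k.1 k.2 (by rw [← hrsq]; positivity) hm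
    have hw1 := weight_le_one (l.1 : ℝ) l.2 ((k.1 : ℝ) - l.1) ((k.2 : ℝ) - l.2)
    rw [← mul_assoc, hw]
    set w := (((l.2 : ℝ) * ((k.2 : ℝ) - l.2) - (l.1 : ℝ) * ((k.1 : ℝ) - l.1)) /
        (r * √(((k.1 : ℝ) - l.1) ^ 2 + ((k.2 : ℝ) - l.2) ^ 2))) ^ 2
    rw [← hw0def] at hwerr
    have hwn : 0 ≤ w := sq_nonneg _
    set X := μ + E with hX
    have hX0 : 0 < X := by linarith
    have hLX := LN_mem hc hN (show 1 / 2 ≤ X by linarith)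
    obtain ⟨hq1, hqK⟩ := hH _ hLX
    obtain ⟨hp0, hpK⟩ := hHp _ hLX
    have hbX := hb _ hLX
    have herr := ratio_err hμ (by linarith : 0 < E) hp0 hpK hq1 hqK
    have hlip := (hl _ hLX _ hLY).trans (mul_le_mul_of_nonneg_left
      (LN_sub_le hc hN hX0 hY0 (by linarith) (by linarith)) (by positivity))
    rw [← hX] at herr
    set R := (μ + E * Hp (LN c N X)) / (μ + E * H (LN c N X)) ^ 2
    set hx := Hp (LN c N X) / H (LN c N X) ^ 2
    set hy := Hp (LN c N Y) / H (LN c N Y) ^ 2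
    have hAY : A / Y ^ 2 ≤ e1 := by
      rw [he1, div_le_div_iff₀ (by positivity) (by positivity)]
      have h5 : s * n ≤ Y := by linarith [sq_nonneg (s - n), sub_sq s n, sq_nonneg (n : ℝ)]
      have h3 : s * Y * (s * n) ≤ s * Y * Y := by gcongr
      have h4 : A * (n * Y) = s * Y * (s * n) := by rw [← hs2]; ring
      linarith
    have hXinv : 1 / X ≤ 4 * (1 / Y) := by
      rw [← mul_div_assoc, div_le_div_iff₀ hX0 hY0]; linarith
    -- first error: `R` against `h(L(X))/X`
    have g1 : |w * (R - hx / X)| ≤ 64 * K ^ 3 * e1 := by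
      rw [abs_mul, abs_of_nonneg hwn]
      calc w * |R - hx / X| ≤ 1 * (4 * K ^ 3 * μ / X ^ 2) := by gcongr
        _ ≤ 1 * (4 * K ^ 3 * A / (Y / 4) ^ 2) := by gcongr; linarith
        _ = 64 * K ^ 3 * (A / Y ^ 2) := by field_simp; ring
        _ ≤ _ := by gcongr
    have hκs : κ ≤ 2 * s := (abs_le_of_sq_le_sq' (by rw [mul_pow, hs2]; linarith) (by positivity)).2
    -- second error: the weight `w` against `w0`
    have g2 : |(w - w0) * (hx / X)| ≤ 32 * K * e1 := by
      rw [abs_mul, abs_div, abs_of_pos hX0]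
      calc |w - w0| * (|hx| / X) ≤ (4 * κ / r) * (K / (Y / 4)) := by gcongr
        _ ≤ (4 * (2 * s) / n) * (K / (Y / 4)) := by gcongr
        _ = _ := by rw [he1]; field_simp; ring
    -- third error: `h(L(X))` against `h(L(Y))`
    have g3 : |w0 * ((hx - hy) * (1 / X))| ≤ 24 * K ^ 2 * c * (1 / ((n : ℝ) ^ 2 * Real.log N)) := by
      rw [abs_mul, abs_mul, abs_of_nonneg hw0n, abs_of_pos (by positivity : 0 < 1 / X)]
      calc w0 * (|hx - hy| * (1 / X)) ≤ 1 * (3 * K ^ 2 * (2 * c / Real.log N) * (4 * (1 / Y))) := by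
            gcongr
        _ ≤ 1 * (3 * K ^ 2 * (2 * c / Real.log N) * (4 * (1 / (n : ℝ) ^ 2))) := by gcongr
        _ = _ := by field_simp; ring
    -- fourth error: `1 / X` against its leading term
    have g4 : |w0 * (hy * (1 / X - (n : ℝ) ^ 2 / (Y * r ^ 2)))| ≤ 9 * K * e1 := by
      rw [abs_mul, abs_mul, abs_of_nonneg hw0n]
      calc _ ≤ 1 * (K * (9 * e1)) := by gcongr
        _ = _ := by ring
    have split : w * R - w0 * (hy * ((n : ℝ) ^ 2 / (Y * r ^ 2))) =
        w * (R - hx / X) + (w - w0) * (hx / X) + w0 * ((hx - hy) * (1 / X))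
        + w0 * (hy * (1 / X - (n : ℝ) ^ 2 / (Y * r ^ 2))) := by ring
    rw [split]
    set e4 := 1 / ((n : ℝ) ^ 2 * Real.log N)
    have hfin : 64 * K ^ 3 * e1 + 32 * K * e1 + 24 * K ^ 2 * c * e4 + 9 * K * e1 ≤
        (105 * K ^ 3 + 24 * K ^ 2 * c) * (e1 + 1 / (N : ℝ) ^ 2 + 0 + e4) := by
      have m1 : K * e1 ≤ K ^ 3 * e1 := by gcongr
      have m2 : 0 ≤ K ^ 3 * e4 := by positivity
      have m3 : 0 ≤ K ^ 2 * c * e1 := by positivity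
      have m4 : 0 ≤ (105 * K ^ 3 + 24 * K ^ 2 * c) * (1 / (N : ℝ) ^ 2) := by positivity
      linarith
    refine ((abs_add_le _ _).trans (add_le_add_left ((abs_add_le _ _).trans
      (add_le_add_left (abs_add_le _ _) _)) _)).trans ?_
    linarith


/-! ### Summation over the spheres -/

open Finset in
lemma box_pairwise (N : ℕ) : (range N : Set ℕ).PairwiseDisjoint
    (fun n => box (α := ℤ × ℤ) (n + 1)) := by
  intro i _ j _ hij
  rw [Function.onFun, Finset.disjoint_left]
  intro l hi hj
  rw [Int.mem_box] at hi hj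
  omega

open Finset in
/-- The error terms sum to `O(1)`, uniformly in `A`, `N` and `k`. -/
lemma error_sum {A : ℝ} (hA : 0 < A) {N : ℕ} (hN : 2 ≤ N) (k : ℤ × ℤ) :
    ∑ n ∈ range N, ∑ l ∈ box (α := ℤ × ℤ) (n + 1),
      (√A / ((n + 1 : ℕ) * (A + ((n + 1 : ℕ) : ℝ) ^ 2)) + 1 / (N : ℝ) ^ 2 + (if l = k then 1 else 0)
        + 1 / (((n + 1 : ℕ) : ℝ) ^ 2 * Real.log N)) ≤ 49 := by
  have hlog := half_le_log hN
  have hlog0 : 0 < Real.log N := by linarith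
  have hN0 : (0 : ℝ) < N := by exact_mod_cast (by omega : 0 < N)
  simp only [sum_add_distrib]
  have b1 : ∑ n ∈ range N, ∑ l ∈ box (α := ℤ × ℤ) (n + 1),
      √A / ((n + 1 : ℕ) * (A + ((n + 1 : ℕ) : ℝ) ^ 2)) ≤ 16 := by
    calc _ ≤ ∑ n ∈ range N, 8 * (√A / (A + ((n : ℝ) + 1) ^ 2)) := by
          refine sum_le_sum fun n _ => (box_sum_le n _ _ fun l _ => le_rfl).trans (le_of_eq ?_)
          push_cast; field_simp
      _ ≤ _ := by rw [← mul_sum]; linarith [sum_sqrt_le hA N]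
  have b2 : ∑ n ∈ range N, ∑ l ∈ box (α := ℤ × ℤ) (n + 1), 1 / (N : ℝ) ^ 2 ≤ 8 := by
    calc _ ≤ ∑ n ∈ range N, 8 * (((n : ℝ) + 1) / (N : ℝ) ^ 2) := by
          refine sum_le_sum fun n _ => (box_sum_le n _ _ fun l _ => le_rfl).trans (le_of_eq ?_)
          ring
      _ ≤ _ := by rw [← mul_sum]; linarith [sum_lin_le (N := N) (by omega)]
  have b3 : ∑ n ∈ range N, ∑ l ∈ box (α := ℤ × ℤ) (n + 1), (if l = k then (1 : ℝ) else 0) ≤ 1 := by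
    rw [← sum_biUnion (box_pairwise N), sum_ite_eq']
    split_ifs <;> norm_num
  have b4 : ∑ n ∈ range N, ∑ l ∈ box (α := ℤ × ℤ) (n + 1),
      1 / (((n + 1 : ℕ) : ℝ) ^ 2 * Real.log N) ≤ 24 := by
    calc _ ≤ ∑ n ∈ range N, 8 / Real.log N * (1 / ((n : ℝ) + 1)) := by
          refine sum_le_sum fun n _ => (box_sum_le n _ _ fun l _ => le_rfl).trans (le_of_eq ?_)
          push_cast; field_simp
      _ ≤ 8 / Real.log N * (1 + Real.log N) := by
          rw [← mul_sum]
          gcongr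
          exact sum_inv_le N
      _ ≤ _ := by
          rw [div_mul_eq_mul_div, div_le_iff₀ hlog0]; linarith
  linarith

open Finset in
/-- The sum over the lattice is finite, since the kernel vanishes for `|ℓ| > N` and at `ℓ = 0`; the
points with `1 ≤ |ℓ|_∞ ≤ N` are collected sphere by sphere. -/
lemma tsum_summand (H Hp : ℝ → ℝ) (c : ℝ) (N : ℕ) (μ S : ℝ) (k : ℤ × ℤ) :
    ∑' l : ℤ × ℤ, summand H Hp c N μ S k l
      = ∑ n ∈ range N, ∑ l ∈ box (α := ℤ × ℤ) (n + 1), summand H Hp c N μ S k l := by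
  rw [tsum_eq_sum (s := (range N).biUnion fun n => box (α := ℤ × ℤ) (n + 1)),
    sum_biUnion (box_pairwise N)]
  intro l hl
  simp only [mem_biUnion, mem_range, not_exists, not_and] at hl
  have hker : Kker N (latR l) (latR (k - l)) = 0 := by
    by_cases h0 : l = 0
    · rw [Kker, if_neg]
      rintro ⟨h, -⟩
      exact h (by simp [h0, latR])
    · obtain ⟨m, hm, -⟩ := Int.existsUnique_mem_box l
      have hm0 : m ≠ 0 := by
        rintro rfl
        simp at hm
        exact h0 hm
      have hNm : N < m := by
        by_contra hcon
        refine hl (m - 1) (by omega) ?_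
        rwa [Nat.sub_add_cancel (by omega)]
      apply Kker_eq_zero_of_l
      have h1 := (box_bounds hm).1
      have h2 : (N : ℝ) < m := by exact_mod_cast hNm
      have h3 : (N : ℝ) ^ 2 < (m : ℝ) ^ 2 := by gcongr
      exact h3.trans_le h1
  rw [summand, hker]
  ring

open Finset in
/-- Carrying out the angular sum in the model by means of `box_weight`. -/
lemma model_sum {h : ℝ → ℝ} {c K A : ℝ} (hc : 0 ≤ c) (hA : 1 / 2 ≤ A) (hK : 0 ≤ K)
    (hb : ∀ y ∈ Set.Icc 0 (2 * c), |h y| ≤ K) {N : ℕ} (hN : 2 ≤ N) :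
    |∑ n ∈ range N, ∑ l ∈ box (α := ℤ × ℤ) (n + 1), modelTerm h c N A (n + 1) l
      - Real.pi * ∑ n ∈ range N, h (LN c N (A + ((n : ℝ) + 1) ^ 2)) *
        (((n : ℝ) + 1) / (A + ((n : ℝ) + 1) ^ 2))| ≤ 24 * K := by
  rw [mul_sum, ← sum_sub_distrib]
  have step : ∀ n : ℕ, |∑ l ∈ box (α := ℤ × ℤ) (n + 1), modelTerm h c N A (n + 1) l -
      Real.pi * (h (LN c N (A + ((n : ℝ) + 1) ^ 2)) * (((n : ℝ) + 1) / (A + ((n : ℝ) + 1) ^ 2)))|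
      ≤ 12 * K * (1 / ((n : ℝ) + 1) ^ 2) := by
    intro n
    have hw := box_weight (n := n + 1) (by omega)
    simp only [modelTerm, ← mul_sum]
    push_cast at hw ⊢
    have hY : 0 < A + ((n : ℝ) + 1) ^ 2 := by positivity
    have hbn := hb _ (LN_mem hc hN (show 1 / 2 ≤ A + ((n : ℝ) + 1) ^ 2 by
      linarith [sq_nonneg ((n : ℝ) + 1)]))
    set y := LN c N (A + ((n : ℝ) + 1) ^ 2)
    set W := ∑ l ∈ box (α := ℤ × ℤ) (n + 1), qd l
    have e : h y * (((n : ℝ) + 1) ^ 2 / (A + ((n : ℝ) + 1) ^ 2)) * W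
        - Real.pi * (h y * (((n : ℝ) + 1) / (A + ((n : ℝ) + 1) ^ 2)))
        = h y * (((n : ℝ) + 1) ^ 2 / (A + ((n : ℝ) + 1) ^ 2)) * (W - Real.pi / ((n : ℝ) + 1)) := by
      field_simp
    have hf : ((n : ℝ) + 1) ^ 2 / (A + ((n : ℝ) + 1) ^ 2) ≤ 1 := by
      rw [div_le_one hY]; linarith
    rw [e, abs_mul, abs_mul,
      abs_of_nonneg (by positivity : 0 ≤ ((n : ℝ) + 1) ^ 2 / (A + ((n : ℝ) + 1) ^ 2))]
    calc _ ≤ K * 1 * (12 / ((n : ℝ) + 1) ^ 2) := by gcongr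
      _ = _ := by ring
  refine (abs_sum_le_sum_abs _ _).trans ((sum_le_sum fun n _ => step n).trans ?_)
  rw [← mul_sum]
  have := mul_le_mul_of_nonneg_left (sum_inv_sq_le N) (by positivity : 0 ≤ 12 * K)
  linarith

lemma lip_of_deriv {f : ℝ → ℝ} {b K : ℝ}
    (hd : ∀ y ∈ Set.Ici (0 : ℝ), DifferentiableWithinAt ℝ f (Set.Ici 0) y)
    (hbd : ∀ y ∈ Set.Icc (0 : ℝ) b, |derivWithin f (Set.Ici 0) y| ≤ K) :
    ∀ x ∈ Set.Icc (0 : ℝ) b, ∀ y ∈ Set.Icc (0 : ℝ) b, |f x - f y| ≤ K * |x - y| := by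
  intro x hx y hy
  exact (convex_Icc (0 : ℝ) b).norm_image_sub_le_of_norm_hasDerivWithin_le
    (fun t ht => (hd t ht.1).hasDerivWithinAt.mono Set.Icc_subset_Ici_self)
    (fun t ht => hbd t ht) hy hx

/-- The increment of `p / q²` in terms of those of `p` and `q`. -/
lemma quot_lip {p₁ p₂ q₁ q₂ K δ : ℝ} (hK : 1 ≤ K) (hp₂ : 0 ≤ p₂) (hp₂' : p₂ ≤ K)
    (h₁ : 1 ≤ q₁) (h₂ : 1 ≤ q₂) (hp : |p₁ - p₂| ≤ K * δ) (hq : |q₁ - q₂| ≤ K * δ) :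
    |p₁ / q₁ ^ 2 - p₂ / q₂ ^ 2| ≤ 3 * K ^ 2 * δ := by
  have hq1 : 0 < q₁ := by linarith
  have hq2 : 0 < q₂ := by linarith
  have hδ : 0 ≤ K * δ := (abs_nonneg _).trans hp
  have e : p₁ / q₁ ^ 2 - p₂ / q₂ ^ 2 = (p₁ - p₂) * (1 / q₁ ^ 2)
      - p₂ * ((q₁ - q₂) * (1 / (q₁ * q₂ ^ 2) + 1 / (q₁ ^ 2 * q₂))) := by
    field_simp; ring
  have i1 : 1 / q₁ ^ 2 ≤ 1 := by
    rw [div_le_one (by positivity)]; exact one_le_pow₀ h₁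
  have i2 : 1 / (q₁ * q₂ ^ 2) ≤ 1 := by
    rw [div_le_one (by positivity)]; exact one_le_mul_of_one_le_of_one_le h₁ (one_le_pow₀ h₂)
  have i3 : 1 / (q₁ ^ 2 * q₂) ≤ 1 := by
    rw [div_le_one (by positivity)]; exact one_le_mul_of_one_le_of_one_le (one_le_pow₀ h₁) h₂
  have g1 : |(p₁ - p₂) * (1 / q₁ ^ 2)| ≤ K * δ := by
    rw [abs_mul, abs_of_nonneg (by positivity : 0 ≤ 1 / q₁ ^ 2)]
    calc _ ≤ (K * δ) * 1 := by gcongr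
      _ = _ := by ring
  have g2 : |p₂ * ((q₁ - q₂) * (1 / (q₁ * q₂ ^ 2) + 1 / (q₁ ^ 2 * q₂)))| ≤ K * ((K * δ) * 2) := by
    rw [abs_mul, abs_mul, abs_of_nonneg hp₂,
      abs_of_nonneg (by positivity : 0 ≤ 1 / (q₁ * q₂ ^ 2) + 1 / (q₁ ^ 2 * q₂))]
    gcongr
    linarith
  rw [e]
  refine (abs_sub _ _).trans ?_
  have : K * δ ≤ K * (K * δ) := le_mul_of_one_le_left hδ hK
  nlinarith

open Finset in
/-- The quantitative form of the theorem: the difference is at most a constant over `log N`, with a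
constant depending on `c` and `K` only. -/
lemma main_bound {c K μ S : ℝ} (hc : 0 ≤ c) (hK : 1 ≤ K) (hμ : 0 ≤ μ) {H Hp : ℝ → ℝ}
    (hH : ∀ y ∈ Set.Icc 0 (2 * c), 1 ≤ H y ∧ H y ≤ K)
    (hHp : ∀ y ∈ Set.Icc 0 (2 * c), 0 ≤ Hp y ∧ Hp y ≤ K)
    (hb : ∀ y ∈ Set.Icc 0 (2 * c), |Hp y / H y ^ 2| ≤ K)
    (hl : ∀ x ∈ Set.Icc 0 (2 * c), ∀ y ∈ Set.Icc 0 (2 * c),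
      |Hp x / H x ^ 2 - Hp y / H y ^ 2| ≤ 3 * K ^ 2 * |x - y|)
    {N : ℕ} (hN : 2 ≤ N) {k : ℤ × ℤ} (hk0 : k ≠ 0) (hkS : nsq k ≤ S) :
    |4 * Real.pi * c / Real.log N * ∑' l : ℤ × ℤ, summand H Hp c N μ S k l
        - ∫ y in (0 : ℝ)..LN c N (μ + S / 2), Hp y / H y ^ 2| ≤
      (c * (49 * (105 * K ^ 3 + 24 * K ^ 2 * c) + 24 * K)
        + (15 * c * K + 36 * (3 * K ^ 2) * c ^ 2)) / Real.log N := by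
  have hlog := half_le_log hN
  have hlog0 : 0 < Real.log N := by linarith
  have hk1 := one_le_nsq hk0
  have hA : 1 / 2 ≤ μ + S / 2 := by linarith
  have hpi := Real.pi_gt_three
  by_cases hkN : nsq k ≤ (N : ℝ) ^ 2
  swap
  · -- the kernel vanishes, and `L A` is itself `O(1 / log N)`
    push Not at hkN
    have hz : ∀ l, summand H Hp c N μ S k l = 0 := fun l => by
      rw [summand, Kker_eq_zero_of_k hkN]; ring
    simp only [hz, tsum_zero, mul_zero, zero_sub, abs_neg]
    have hmem := LN_mem hc hN hA
    have hle : LN c N (μ + S / 2) ≤ c / Real.log N := LN_le hc hN (by linarith)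
    have := intervalIntegral.norm_integral_le_of_norm_le_const (a := 0) (b := LN c N (μ + S / 2))
      (f := fun y => Hp y / H y ^ 2) (C := K) (fun x hx => by
        rw [Set.uIoc_of_le hmem.1] at hx
        exact hb x ⟨hx.1.le, hx.2.trans hmem.2⟩)
    rw [Real.norm_eq_abs, sub_zero, abs_of_nonneg hmem.1] at this
    calc _ ≤ K * LN c N (μ + S / 2) := this
      _ ≤ K * (c / Real.log N) := by gcongr
      _ = (c * K) / Real.log N := by ring
      _ ≤ _ := by
        gcongr
        have h1 : 0 ≤ c * K := by positivity
        have h2 : 0 ≤ c * (49 * (105 * K ^ 3 + 24 * K ^ 2 * c) + 24 * K) := by positivity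
        have h3 : 0 ≤ 36 * (3 * K ^ 2) * c ^ 2 := by positivity
        linarith
  · set C1 := 105 * K ^ 3 + 24 * K ^ 2 * c
    have hC1 : 0 ≤ C1 := by positivity
    rw [tsum_summand]
    set T := ∑ n ∈ range N, ∑ l ∈ box (α := ℤ × ℤ) (n + 1), summand H Hp c N μ S k l with hT
    have f1 : |4 * Real.pi ^ 2 * T - ∑ n ∈ range N, ∑ l ∈ box (α := ℤ × ℤ) (n + 1),
        modelTerm (fun y => Hp y / H y ^ 2) c N (μ + S / 2) (n + 1) l| ≤ C1 * 49 := by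
      rw [hT, mul_sum, ← sum_sub_distrib]
      simp only [mul_sum, ← sum_sub_distrib]
      refine le_trans ?_ (mul_le_mul_of_nonneg_left
        (error_sum (A := μ + S / 2) (by linarith) hN k) hC1)
      simp only [mul_sum]
      refine (abs_sum_le_sum_abs _ _).trans (sum_le_sum fun n _ =>
        (abs_sum_le_sum_abs _ _).trans (sum_le_sum fun l hln => ?_))
      exact pointwise hc hK hμ hH hHp hb hl hN hk0 hkS hkN (Nat.succ_pos n) hln
    have f2 := model_sum (h := fun y => Hp y / H y ^ 2) hc hA (by linarith) hb hN
    have f3 := riemann_log hc (by linarith) (by positivity) hA hb hl hN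
    set M := ∑ n ∈ range N, ∑ l ∈ box (α := ℤ × ℤ) (n + 1),
        modelTerm (fun y => Hp y / H y ^ 2) c N (μ + S / 2) (n + 1) l
    set B := ∑ n ∈ range N, (fun y => Hp y / H y ^ 2) (LN c N (μ + S / 2 + ((n : ℝ) + 1) ^ 2)) *
        (((n : ℝ) + 1) / (μ + S / 2 + ((n : ℝ) + 1) ^ 2))
    have f4 : |4 * Real.pi ^ 2 * T - Real.pi * B| ≤ C1 * 49 + 24 * K :=
      (abs_sub_le _ M _).trans (add_le_add f1 f2)
    have f5 : |4 * Real.pi * c / Real.log N * T - c / Real.log N * B|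
        ≤ c * (49 * C1 + 24 * K) / Real.log N := by
      have e : 4 * Real.pi * c / Real.log N * T - c / Real.log N * B
          = c / Real.log N * (1 / Real.pi) * (4 * Real.pi ^ 2 * T - Real.pi * B) := by
        field_simp
      have hpi1 : 1 / Real.pi ≤ 1 := by rw [div_le_one (by linarith)]; linarith
      rw [e, abs_mul, abs_of_nonneg (by positivity : 0 ≤ c / Real.log N * (1 / Real.pi))]
      calc _ ≤ c / Real.log N * 1 * (C1 * 49 + 24 * K) := by gcongr
        _ = _ := by ring
    refine (abs_sub_le _ (c / Real.log N * B) _).trans ((add_le_add f5 f3).trans (le_of_eq ?_))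
    ring

theorem stmt8 (lam K : ℝ) (hlam : 0 < lam) (hK : 1 ≤ K) (H Hp : ℝ → ℝ)
    (hH1 : ∀ y : ℝ, 0 ≤ y → 1 ≤ H y)
    (hHp0 : ∀ y : ℝ, 0 ≤ y → 0 ≤ Hp y)
    (hHdiff : ∀ y ∈ Set.Ici (0:ℝ), DifferentiableWithinAt ℝ H (Set.Ici 0) y)
    (hHpdiff : ∀ y ∈ Set.Ici (0:ℝ), DifferentiableWithinAt ℝ Hp (Set.Ici 0) y)
    (hbdd : ∀ y ∈ Set.Icc (0:ℝ) (2 * (lam ^ 2 / Real.pi)),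
      |H y| ≤ K ∧ |derivWithin H (Set.Ici 0) y| ≤ K ∧
        |Hp y| ≤ K ∧ |derivWithin Hp (Set.Ici 0) y| ≤ K) :
    ∀ ε : ℝ, 0 < ε → ∃ N₀ : ℕ, ∀ N : ℕ, N₀ ≤ N → 2 ≤ N →
      ∀ (n : ℕ) (μ : ℝ), 0 ≤ μ → ∀ k : Fin (n + 1) → ℤ × ℤ, (∀ i, k i ≠ 0) →
        |(4 * lam ^ 2 / Real.log (N : ℝ)) *
              (∑' ℓ : ℤ × ℤ,
                (Kker N (latR ℓ) (latR (k 0 - ℓ))) ^ 2 *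
                  ((μ + Efun (∑ i, nsq (k i) - nsq (k 0)) ℓ (k 0 - ℓ) *
                        Hp (LN (lam ^ 2 / Real.pi) N
                          (μ + Efun (∑ i, nsq (k i) - nsq (k 0)) ℓ (k 0 - ℓ)))) /
                    (μ + Efun (∑ i, nsq (k i) - nsq (k 0)) ℓ (k 0 - ℓ) *
                        H (LN (lam ^ 2 / Real.pi) N
                          (μ + Efun (∑ i, nsq (k i) - nsq (k 0)) ℓ (k 0 - ℓ)))) ^ 2)) -
            ∫ y in (0:ℝ)..(LN (lam ^ 2 / Real.pi) N (μ + (∑ i, nsq (k i)) / 2)),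
              Hp y / (H y) ^ 2| ≤ ε := by
  intro ε hε
  have hpi := Real.pi_pos
  have hc : 0 ≤ lam ^ 2 / Real.pi := by positivity
  have hlam4 : 4 * lam ^ 2 = 4 * Real.pi * (lam ^ 2 / Real.pi) := by field_simp
  rw [hlam4]
  set c := lam ^ 2 / Real.pi
  have hH : ∀ y ∈ Set.Icc 0 (2 * c), 1 ≤ H y ∧ H y ≤ K := fun y hy =>
    ⟨hH1 y hy.1, (le_abs_self _).trans (hbdd y hy).1⟩
  have hHp : ∀ y ∈ Set.Icc 0 (2 * c), 0 ≤ Hp y ∧ Hp y ≤ K := fun y hy =>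
    ⟨hHp0 y hy.1, (le_abs_self _).trans (hbdd y hy).2.2.1⟩
  have hb : ∀ y ∈ Set.Icc 0 (2 * c), |Hp y / H y ^ 2| ≤ K := fun y hy => by
    obtain ⟨hp0, hpK⟩ := hHp y hy
    have h1 : 1 ≤ H y ^ 2 := one_le_pow₀ (hH y hy).1
    rw [abs_of_nonneg (by positivity)]
    exact (div_le_self hp0 h1).trans hpK
  have lH := lip_of_deriv hHdiff (fun y hy => (hbdd y hy).2.1)
  have lHp := lip_of_deriv hHpdiff (fun y hy => (hbdd y hy).2.2.2)
  have hl : ∀ x ∈ Set.Icc 0 (2 * c), ∀ y ∈ Set.Icc 0 (2 * c),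
      |Hp x / H x ^ 2 - Hp y / H y ^ 2| ≤ 3 * K ^ 2 * |x - y| := fun x hx y hy =>
    quot_lip hK (hHp y hy).1 (hHp y hy).2 (hH x hx).1 (hH y hy).1 (lHp x hx y hy) (lH x hx y hy)
  set C := c * (49 * (105 * K ^ 3 + 24 * K ^ 2 * c) + 24 * K)
        + (15 * c * K + 36 * (3 * K ^ 2) * c ^ 2)
  -- `N ≥ exp (C / ε)` makes `C / log N ≤ ε`
  refine ⟨⌈Real.exp (C / ε)⌉₊, fun N hN0 hN n μ hμ k hk => ?_⟩
  have hkS : nsq (k 0) ≤ ∑ i, nsq (k i) :=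
    Finset.single_le_sum (f := fun i => nsq (k i))
      (fun i _ => by unfold nsq; positivity) (Finset.mem_univ 0)
  refine (main_bound hc hK hμ hH hHp hb hl hN (hk 0) hkS).trans ?_
  have hlog0 : 0 < Real.log N := by linarith [half_le_log hN]
  have h1 : C / ε ≤ Real.log N := by
    rw [Real.le_log_iff_exp_le (by positivity)]
    exact (Nat.le_ceil _).trans (by exact_mod_cast hN0)
  rw [div_le_iff₀ hε] at h1
  rw [div_le_iff₀ hlog0]
  linarith
end

section
/- Fix λ̂ > 0 and set 𝔠 = λ̂²/π. For every integer n ≥ 2 and every μ ≥ 0, lim_{N→∞} (2λ̂²/log N) · Σ_{ℓ ∈ ℤ², 1 ≤ |ℓ| ≤ N} ((ℓ₁² − ℓ₂²)²/(4π²|ℓ|⁴)) · 1/(μ + |ℓ|²·(1 + G_n(L^N(μ + |ℓ|²)))) = ½·G_{n+1}(𝔠). -/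
/-!
Write `w(ℓ) = (ℓ₁² - ℓ₂²)² / |ℓ|⁶`, `Λ = log N` and `f = 1 / (1 + G n)`. The summand is
`w(ℓ) / (4π²)` times a factor in `[0, 1]`, and this factor only depends on `|ℓ|`. The disc is
cut into the dyadic shells `2 ^ k ≤ |ℓ| < 2 ^ (k + 1)`.

* On one shell the total weight `∑ w(ℓ)` is, after scaling by `2 ^ (-k)`, a Riemann sum of a
  function over a fixed annulus, so it converges to `∫ cos² (2θ) / r dr dθ = π log 2`
  (`tendsto_shell`, `integral_ann`).
* On the `k`-th shell `L^N(μ + |ℓ|²) = 𝔠 - k δ + O(1 / Λ)` with `δ = 𝔠 log 2 / Λ`. Since `G n` is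
  nonnegative and `1`-Lipschitz on `[0, ∞)` (`G_props`), the factor is
  `f(𝔠 - k δ) + O(1 / Λ + μ 4 ^ (-k))` (`hfac_close`).
* As `G (n + 1)' = f`, the sum `δ ∑ f(𝔠 - k δ)` over `k < K = ⌊log₂ N⌋` telescopes to
  `G (n + 1) 𝔠 + O(δ)` (`riemann_close`).

Replacing the shell weights by their limit costs a Cesàro mean that tends to `0`, so `δ` times the
sum over all shells tends to `π log 2 · G (n + 1) 𝔠` (`shells_close`). Restoring the constants
`2 λ² / (4π² Λ) = δ / (2π log 2)`, where `λ² = π 𝔠`, gives the limit `G (n + 1) 𝔠 / 2`.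
-/


/-- The functions `G_j` from the paper: `G_2 ≡ 0` and, for `j ≥ 3`,
`G_j(x) = ∫_0^x dy / (1 + G_{j-1}(y))`. (Values for `j = 0, 1` are irrelevant.) -/
noncomputable def G : ℕ → ℝ → ℝ
  | 0, _ => 0
  | 1, _ => 0
  | 2, _ => 0
  | j + 3, x => ∫ y in (0:ℝ)..x, 1 / (1 + G (j + 2) y)

/-! ### The functions `G` -/

theorem G_succ {n : ℕ} (hn : 2 ≤ n) (x : ℝ) :
    G (n + 1) x = ∫ y in (0 : ℝ)..x, 1 / (1 + G n y) := by
  obtain ⟨m, rfl⟩ := Nat.exists_eq_add_of_le' hn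
  rw [G]

theorem abs_recip_sub_le {a b : ℝ} (ha : 0 ≤ a) (hb : 0 ≤ b) :
    |1 / (1 + a) - 1 / (1 + b)| ≤ |a - b| := by
  have h : 1 / (1 + a) - 1 / (1 + b) = (b - a) / ((1 + a) * (1 + b)) := by
    field_simp; ring
  rw [h, abs_div, abs_sub_comm b a, abs_of_pos (by positivity : 0 < (1 + a) * (1 + b))]
  exact div_le_self (abs_nonneg _) (by nlinarith [mul_nonneg ha hb])

theorem G_intervalIntegrable {n : ℕ} (h0 : ∀ x, 0 ≤ x → 0 ≤ G n x)
    (hL : ∀ x y, 0 ≤ x → x ≤ y → |G n y - G n x| ≤ y - x) {x y : ℝ} (hx : 0 ≤ x) (hy : 0 ≤ y) :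
    IntervalIntegrable (fun t => 1 / (1 + G n t)) MeasureTheory.volume x y := by
  have hc : ContinuousOn (fun t => 1 / (1 + G n t)) (Set.Ici 0) := by
    have : LipschitzOnWith 1 (G n) (Set.Ici 0) := by
      refine LipschitzOnWith.of_dist_le_mul fun a ha b hb => ?_
      rw [Real.dist_eq, Real.dist_eq, NNReal.coe_one, one_mul]
      rcases le_total a b with h | h
      · rw [abs_sub_comm, abs_sub_comm a b]
        exact (hL a b ha h).trans (le_abs_self _)
      · exact (hL b a hb h).trans (le_abs_self _)
    refine continuousOn_const.div (continuousOn_const.add this.continuousOn) fun t ht => ?_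
    have := h0 t ht
    positivity
  refine (hc.mono fun t ht => ?_).intervalIntegrable
  exact (le_min hx hy).trans ht.1

/-- On `[0, ∞)` every `G n` with `n ≥ 2` is nonnegative and `1`-Lipschitz. -/
theorem G_props {n : ℕ} (hn : 2 ≤ n) : (∀ x, 0 ≤ x → 0 ≤ G n x) ∧
    (∀ x y, 0 ≤ x → x ≤ y → |G n y - G n x| ≤ y - x) := by
  induction n, hn using Nat.le_induction with
  | base => exact ⟨fun x _ => by simp [G], fun x y _ h => by simpa [G] using h⟩
  | succ n hn ih =>
    obtain ⟨h0, hL⟩ := ih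
    refine ⟨fun x hx => ?_, fun x y hx hxy => ?_⟩
    · rw [G_succ hn]
      refine intervalIntegral.integral_nonneg hx fun t ht => ?_
      have := h0 t ht.1
      positivity
    · rw [G_succ hn, G_succ hn, intervalIntegral.integral_interval_sub_left
        (G_intervalIntegrable h0 hL le_rfl (hx.trans hxy)) (G_intervalIntegrable h0 hL le_rfl hx)]
      have := intervalIntegral.norm_integral_le_of_norm_le_const (a := x) (b := y) (C := 1)
        (f := fun t => 1 / (1 + G n t)) (fun t ht => by
          rw [Set.uIoc_of_le hxy] at ht
          have := h0 t (hx.trans ht.1.le)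
          rw [Real.norm_of_nonneg (by positivity)]
          exact div_le_one_of_le₀ (by linarith) (by positivity))
      rwa [Real.norm_eq_abs, one_mul, abs_of_nonneg (sub_nonneg.2 hxy)] at this

/-- Quantitative form of `G (n + 1)' = 1 / (1 + G n)`. -/
theorem G_taylor {n : ℕ} (hn : 2 ≤ n) {x y : ℝ} (hy : 0 ≤ y) (hyx : y ≤ x) :
    |(x - y) * (1 / (1 + G n x)) - (G (n + 1) x - G (n + 1) y)| ≤ (x - y) ^ 2 := by
  obtain ⟨h0, hL⟩ := G_props hn
  have hx := hy.trans hyx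
  rw [G_succ hn, G_succ hn, intervalIntegral.integral_interval_sub_left
    (G_intervalIntegrable h0 hL le_rfl hx) (G_intervalIntegrable h0 hL le_rfl hy)]
  have e : (x - y) * (1 / (1 + G n x)) = ∫ _ in y..x, 1 / (1 + G n x) := by simp
  rw [e, ← intervalIntegral.integral_sub (by simp) (G_intervalIntegrable h0 hL hy hx)]
  have := intervalIntegral.norm_integral_le_of_norm_le_const (a := y) (b := x) (C := x - y)
    (f := fun t => 1 / (1 + G n x) - 1 / (1 + G n t)) (fun t ht => by
      rw [Set.uIoc_of_le hyx] at ht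
      have ht0 := hy.trans ht.1.le
      refine (abs_recip_sub_le (h0 x hx) (h0 t ht0)).trans ((hL t x ht0 ht.2).trans ?_)
      linarith [ht.1])
  rwa [Real.norm_eq_abs, abs_of_nonneg (sub_nonneg.2 hyx), ← sq] at this

/-! ### Dyadic shells and their weights -/

/-- The lattice points `ℓ` with `2 ^ k ≤ |ℓ| < 2 ^ (k + 1)`. The box
only serves to make the set a `Finset`. -/
noncomputable def shell (k : ℕ) : Finset (ℤ × ℤ) :=
  ((Finset.Icc (-2 ^ (k + 1)) (2 ^ (k + 1))) ×ˢ (Finset.Icc (-2 ^ (k + 1)) (2 ^ (k + 1)))).filter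
    fun l => 4 ^ k ≤ l.1 ^ 2 + l.2 ^ 2 ∧ l.1 ^ 2 + l.2 ^ 2 < 4 ^ (k + 1)

theorem mem_shell {k : ℕ} {l : ℤ × ℤ} :
    l ∈ shell k ↔ (4 : ℝ) ^ k ≤ nsq l ∧ nsq l < 4 ^ (k + 1) := by
  have e : ((4 : ℝ) ^ k ≤ nsq l ∧ nsq l < 4 ^ (k + 1)) ↔
      (4 ^ k ≤ l.1 ^ 2 + l.2 ^ 2 ∧ l.1 ^ 2 + l.2 ^ 2 < 4 ^ (k + 1)) := by
    unfold nsq; norm_cast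
  rw [e, shell, Finset.mem_filter, and_iff_right_iff_imp]
  rintro ⟨-, h⟩
  have h4 : (4 : ℤ) ^ (k + 1) = (2 ^ (k + 1)) ^ 2 := by rw [← pow_mul, mul_comm, pow_mul]; norm_num
  rw [h4] at h
  have hp : (0 : ℤ) ≤ 2 ^ (k + 1) := by positivity
  have h1 := abs_le_of_sq_le_sq' (a := l.1) (by nlinarith [sq_nonneg l.2]) hp
  have h2 := abs_le_of_sq_le_sq' (a := l.2) (by nlinarith [sq_nonneg l.1]) hp
  simp only [Finset.mem_product, Finset.mem_Icc]
  exact ⟨h1, h2⟩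

/-- The weight `(ℓ₁² - ℓ₂²)² / |ℓ|⁶`, i.e. `cos² (2θ) / |ℓ|²` in polar coordinates. -/
noncomputable def wt (l : ℤ × ℤ) : ℝ := ((l.1 : ℝ) ^ 2 - (l.2 : ℝ) ^ 2) ^ 2 / nsq l ^ 3

theorem nsq_nonneg (l : ℤ × ℤ) : 0 ≤ nsq l := by unfold nsq; positivity

theorem wt_nonneg (l : ℤ × ℤ) : 0 ≤ wt l := by
  have := nsq_nonneg l
  unfold wt; positivity

/-- The annulus `1 ≤ |x| < 2` in the plane. -/
def ann : Set (Fin 2 → ℝ) := {x | 1 ≤ x 0 ^ 2 + x 1 ^ 2} ∩ {x | x 0 ^ 2 + x 1 ^ 2 < 4}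

/-- The weight on the plane, made continuous at the origin by truncating the denominator;
on `ann` the truncation has no effect. -/
noncomputable def Fw (x : Fin 2 → ℝ) : ℝ :=
  (x 0 ^ 2 - x 1 ^ 2) ^ 2 / (max (x 0 ^ 2 + x 1 ^ 2) 1) ^ 3

theorem continuous_Fw : Continuous Fw := by
  unfold Fw
  refine Continuous.div (by fun_prop) (by fun_prop) fun x => ?_
  have : (1 : ℝ) ≤ max (x 0 ^ 2 + x 1 ^ 2) 1 := le_max_right _ _
  positivity

/-- The sup norm of `Fin 2 → ℝ` does not see circles, so the claim is transported
to a sphere in `EuclideanSpace`. -/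
theorem volume_circle (r : ℝ) (hr : 0 ≤ r) :
    MeasureTheory.volume {x : Fin 2 → ℝ | x 0 ^ 2 + x 1 ^ 2 = r} = 0 := by
  have h := (EuclideanSpace.volume_preserving_symm_measurableEquiv_toLp (Fin 2)).symm
  rw [show MeasureTheory.volume {x : Fin 2 → ℝ | x 0 ^ 2 + x 1 ^ 2 = r} =
    MeasureTheory.volume ((MeasurableEquiv.toLp 2 (Fin 2 → ℝ)).symm ⁻¹'
      {x : Fin 2 → ℝ | x 0 ^ 2 + x 1 ^ 2 = r}) from (h.symm.measure_preimage_equiv _).symm]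
  convert MeasureTheory.Measure.addHaar_sphere MeasureTheory.volume
    (0 : EuclideanSpace ℝ (Fin 2)) (Real.sqrt r) using 2
  ext x
  simp [EuclideanSpace.norm_eq, Fin.sum_univ_two]
  rw [Real.sqrt_inj (by positivity) hr]

theorem frontier_ann : MeasureTheory.volume (frontier ann) = 0 := by
  refine MeasureTheory.measure_mono_null (t := {x : Fin 2 → ℝ | x 0 ^ 2 + x 1 ^ 2 = 1} ∪
    {x : Fin 2 → ℝ | x 0 ^ 2 + x 1 ^ 2 = 4}) (fun x hx => ?_)
    (MeasureTheory.measure_union_null (volume_circle 1 (by norm_num))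
      (volume_circle 4 (by norm_num)))
  rcases frontier_inter_subset _ _ hx with h | h
  · exact Or.inl (frontier_le_subset_eq continuous_const (by fun_prop) h.1).symm
  · exact Or.inr (frontier_lt_subset_eq (by fun_prop) continuous_const h.2)

theorem measurableSet_ann : MeasurableSet ann :=
  (measurableSet_le measurable_const (by fun_prop)).inter
    (measurableSet_lt (by fun_prop) measurable_const)

theorem isBounded_ann : Bornology.IsBounded ann := by
  refine (Metric.isBounded_closedBall (x := (0 : Fin 2 → ℝ)) (r := 2)).subset fun x hx => ?_
  have h : x 0 ^ 2 + x 1 ^ 2 < 4 := hx.2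
  rw [mem_closedBall_zero_iff, pi_norm_le_iff_of_nonneg (by norm_num)]
  intro i
  rw [Real.norm_eq_abs]
  refine abs_le_of_sq_le_sq ?_ (by norm_num)
  fin_cases i
  · simp; nlinarith [sq_nonneg (x 1)]
  · simp; nlinarith [sq_nonneg (x 0)]

theorem integral_cos_two_mul_sq : ∫ θ in Set.Ioo (-Real.pi) Real.pi, Real.cos (2 * θ) ^ 2
    = Real.pi := by
  rw [← MeasureTheory.integral_Ioc_eq_integral_Ioo,
    ← intervalIntegral.integral_of_le (by linarith [Real.pi_pos]),
    intervalIntegral.integral_comp_mul_left (fun t => Real.cos t ^ 2) (by norm_num),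
    integral_cos_sq]
  have h1 : Real.sin (2 * Real.pi) = 0 := Real.sin_two_pi
  have h2 : Real.sin (2 * -Real.pi) = 0 := by rw [mul_neg, Real.sin_neg, h1, neg_zero]
  rw [h1, h2, smul_eq_mul]
  ring

/-- The total weight of the annulus `1 ≤ |x| < 2`, computed in polar coordinates. -/
theorem integral_ann : ∫ x in ann, Fw x = Real.pi * Real.log 2 := by
  have h := (MeasureTheory.volume_preserving_finTwoArrow ℝ).symm
  rw [← MeasureTheory.integral_indicator measurableSet_ann,
    ← h.integral_comp' (g := ann.indicator Fw),
    ← integral_comp_polarCoord_symm, polarCoord_target]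
  have e : Set.EqOn (fun p : ℝ × ℝ => p.1 • ann.indicator Fw
      ((MeasurableEquiv.finTwoArrow (α := ℝ)).symm (polarCoord.symm p)))
      (fun p => (Set.Ico (1 : ℝ) 2).indicator (fun r => r⁻¹) p.1 * Real.cos (2 * p.2) ^ 2)
      (Set.Ioi (0 : ℝ) ×ˢ Set.Ioo (-Real.pi) Real.pi) := by
    rintro ⟨r, θ⟩ ⟨hr, -⟩
    have hr : 0 < r := hr
    have hq : (r * Real.cos θ) ^ 2 + (r * Real.sin θ) ^ 2 = r ^ 2 := by
      linear_combination r ^ 2 * Real.sin_sq_add_cos_sq θ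
    have hd : (r * Real.cos θ) ^ 2 - (r * Real.sin θ) ^ 2 = r ^ 2 * Real.cos (2 * θ) := by
      rw [Real.cos_two_mul']; ring
    have hm : ((MeasurableEquiv.finTwoArrow (α := ℝ)).symm (polarCoord.symm (r, θ))) ∈ ann ↔
        r ∈ Set.Ico (1 : ℝ) 2 := by
      simp only [ann, Set.mem_inter_iff, Set.mem_ofPred_eq, Set.mem_Ico]
      simp only [polarCoord_symm_apply, MeasurableEquiv.finTwoArrow,
        MeasurableEquiv.piFinTwo_symm_apply, Fin.cons_zero, Fin.cons_one]
      rw [hq]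
      constructor
      · rintro ⟨h1, h2⟩; constructor <;> nlinarith
      · rintro ⟨h1, h2⟩; constructor <;> nlinarith
    dsimp only
    by_cases hc : r ∈ Set.Ico (1 : ℝ) 2
    · rw [Set.indicator_of_mem (hm.2 hc), Set.indicator_of_mem hc, Fw]
      simp only [polarCoord_symm_apply, MeasurableEquiv.finTwoArrow,
        MeasurableEquiv.piFinTwo_symm_apply, Fin.cons_zero, Fin.cons_one]
      rw [hq, hd, max_eq_left (by nlinarith [hc.1]), smul_eq_mul]
      field_simp
    · rw [Set.indicator_of_notMem (fun h => hc (hm.1 h)), Set.indicator_of_notMem hc]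
      simp
  rw [MeasureTheory.setIntegral_congr_fun (measurableSet_Ioi.prod measurableSet_Ioo) e]
  rw [MeasureTheory.Measure.volume_eq_prod, MeasureTheory.setIntegral_prod_mul
    (fun r => (Set.Ico (1 : ℝ) 2).indicator (fun r => r⁻¹) r) (fun θ => Real.cos (2 * θ) ^ 2),
    integral_cos_two_mul_sq, MeasureTheory.setIntegral_indicator measurableSet_Ico,
    Set.inter_eq_right.2 (fun x (hx : x ∈ Set.Ico (1 : ℝ) 2) =>
      Set.mem_Ioi.2 (lt_of_lt_of_le one_pos hx.1)),
    MeasureTheory.integral_Ico_eq_integral_Ioc, ← intervalIntegral.integral_of_le (by norm_num),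
    integral_inv_of_pos (by norm_num) (by norm_num)]
  rw [div_one, mul_comm]

open scoped Pointwise in
/-- The total weight of the shells converges: scaled by `2 ^ (-k)`, the shell sum is a Riemann sum
for the integral over the annulus. -/
theorem tendsto_shell : Filter.Tendsto (fun k => ∑ l ∈ shell k, wt l) Filter.atTop
    (nhds (Real.pi * Real.log 2)) := by
  have h := (tendsto_tsum_div_pow_atTop_integral ann Fw continuous_Fw isBounded_ann
    measurableSet_ann frontier_ann).comp (tendsto_pow_atTop_atTop_of_one_lt (one_lt_two (α := ℕ)))
  rw [integral_ann] at h
  refine h.congr fun k => ?_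
  have hp : (0 : ℝ) < 2 ^ k := by positivity
  have h4 : (4 : ℝ) ^ k = (2 ^ k) ^ 2 := by rw [← pow_mul, mul_comm, pow_mul]; norm_num
  have h4' : (4 : ℝ) ^ (k + 1) = 4 * (2 ^ k) ^ 2 := by rw [pow_succ, h4]; ring
  let φ : ℤ × ℤ → Fin 2 → ℝ := fun l => ![(l.1 : ℝ) / 2 ^ k, (l.2 : ℝ) / 2 ^ k]
  have hq : ∀ l, φ l 0 ^ 2 + φ l 1 ^ 2 = nsq l / (2 ^ k) ^ 2 := fun l => by
    simp [φ, nsq]; field_simp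
  have hmem : ∀ l, l ∈ shell k → φ l ∈ ann ∩
      (((2 ^ k : ℕ) : ℝ)⁻¹ • (Submodule.span ℤ (Set.range (Pi.basisFun ℝ (Fin 2)))
        : Set (Fin 2 → ℝ))) := by
    intro l hl
    rw [mem_shell, h4, h4'] at hl
    refine ⟨⟨?_, ?_⟩, ?_⟩
    · simp only [Set.mem_ofPred_eq]; rw [hq, le_div_iff₀ (by positivity)]; linarith [hl.1]
    · simp only [Set.mem_ofPred_eq]; rw [hq, div_lt_iff₀ (by positivity)]; linarith [hl.2]
    · rw [← Submodule.coe_pointwise_smul, SetLike.mem_coe, BoxIntegral.unitPartition.mem_smul_span_iff]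
      intro i
      fin_cases i
      · exact ⟨l.1, by simp [φ]; field_simp⟩
      · exact ⟨l.2, by simp [φ]; field_simp⟩
  let ψ : shell k → ↑(ann ∩
      (((2 ^ k : ℕ) : ℝ)⁻¹ • (Submodule.span ℤ (Set.range (Pi.basisFun ℝ (Fin 2)))
        : Set (Fin 2 → ℝ)))) := fun l => ⟨φ l.1, hmem l.1 l.2⟩
  have hψ : Function.Bijective ψ := by
    constructor
    · rintro ⟨a, ha⟩ ⟨b, hb⟩ hab
      have h' : φ a = φ b := congrArg Subtype.val hab
      have h0 := congrFun h' 0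
      have h1 := congrFun h' 1
      simp [φ] at h0 h1
      exact Subtype.ext (Prod.ext h0 h1)
    · rintro ⟨x, hx, hx'⟩
      rw [← Submodule.coe_pointwise_smul, SetLike.mem_coe,
        BoxIntegral.unitPartition.mem_smul_span_iff] at hx'
      obtain ⟨a, ha⟩ := hx' 0
      obtain ⟨b, hb⟩ := hx' 1
      simp at ha hb
      have hφ : φ (a, b) = x := by
        ext i
        fin_cases i
        · simp [φ, ha]
        · simp [φ, hb]
      have hn : nsq (a, b) = (x 0 ^ 2 + x 1 ^ 2) * (2 ^ k) ^ 2 := by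
        rw [← hφ, hq]; field_simp
      have hs : (a, b) ∈ shell k := by
        rw [mem_shell, h4, h4', hn]
        have h1 : 1 ≤ x 0 ^ 2 + x 1 ^ 2 := hx.1
        have h2 : x 0 ^ 2 + x 1 ^ 2 < 4 := hx.2
        constructor
        · exact le_mul_of_one_le_left (by positivity) h1
        · gcongr
      exact ⟨⟨(a, b), hs⟩, Subtype.ext hφ⟩
  simp only [Function.comp]
  rw [← (Equiv.ofBijective ψ hψ).tsum_eq, ← tsum_div_const, ← Finset.tsum_subtype (shell k) wt]
  refine tsum_congr fun l => ?_
  have hl := (hmem l.1 l.2).1.1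
  simp only [Set.mem_ofPred_eq] at hl
  have hpos : 0 < nsq l.1 := by
    have := (mem_shell.1 l.2).1
    have : (0 : ℝ) < 4 ^ k := by positivity
    linarith
  change Fw (φ l.1) / _ = _
  rw [Fw, max_eq_left hl, hq, wt]
  simp [φ]
  field_simp

/-! ### Comparison of the summand with its value on a shell -/

/-- The factor by which the exact summand differs from `wt / (4 π²)`. -/
noncomputable def hfac (c : ℝ) (n : ℕ) (μ : ℝ) (N : ℕ) (m : ℝ) : ℝ :=
  m / (μ + m * (1 + G n (LN c N (μ + m))))

theorem LN_nonneg {c : ℝ} (hc : 0 ≤ c) (N : ℕ) {x : ℝ} (hx : 0 ≤ x) : 0 ≤ LN c N x := by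
  have h1 : 0 ≤ Real.log ((N : ℝ) ^ 2) := by
    rw [Real.log_pow]; exact mul_nonneg (by norm_num) (Real.log_natCast_nonneg N)
  have h2 : 0 ≤ Real.log (1 + (N : ℝ) ^ 2 / x) :=
    Real.log_nonneg (le_add_of_nonneg_right (by positivity))
  unfold LN; positivity

theorem hfac_mem {c : ℝ} (hc : 0 ≤ c) {n : ℕ} (hn : 2 ≤ n) {μ : ℝ} (hμ : 0 ≤ μ) (N : ℕ)
    {m : ℝ} (hm : 0 < m) : 0 ≤ hfac c n μ N m ∧ hfac c n μ N m ≤ 1 := by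
  have hg := (G_props hn).1 _ (LN_nonneg hc N (add_nonneg hμ hm.le))
  unfold hfac
  refine ⟨by positivity, div_le_one_of_le₀ ?_ (by positivity)⟩
  nlinarith [mul_nonneg hm.le hg]

/-- On the `k`-th shell, `L^N(μ + |ℓ|²)` is within `O(1 / log N)` of
`𝔠 (1 - k log 2 / log N)`. -/
theorem LN_close {c : ℝ} (hc : 0 ≤ c) {μ : ℝ} (hμ : 0 ≤ μ) {N : ℕ} (hN : 2 ≤ N) {k : ℕ} {m : ℝ}
    (h1 : 4 ^ k ≤ m) (h2 : m ≤ 4 ^ (k + 1)) (h3 : m ≤ (N : ℝ) ^ 2) :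
    |LN c N (μ + m) - (c - k * (c * Real.log 2 / Real.log N))| ≤
      Real.log (μ + 4) / (2 * Real.log 2) * (c * Real.log 2 / Real.log N) := by
  have hN' : (2 : ℝ) ≤ N := by exact_mod_cast hN
  have hΛ : 0 < Real.log N := Real.log_pos (by linarith)
  have hl2 : 0 < Real.log 2 := Real.log_pos (by norm_num)
  have h4k : (1 : ℝ) ≤ 4 ^ k := one_le_pow₀ (by norm_num)
  have hm : 1 ≤ m := h4k.trans h1
  have hN2 : 1 ≤ (N : ℝ) ^ 2 := hm.trans h3
  have hl4 : Real.log 4 = 2 * Real.log 2 := by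
    rw [show (4 : ℝ) = 2 ^ 2 by norm_num, Real.log_pow]; norm_num
  have e : LN c N (μ + m) - (c - k * (c * Real.log 2 / Real.log N)) =
      c / (2 * Real.log N) *
        Real.log ((1 + (N : ℝ) ^ 2 / (μ + m)) * (4 ^ k / (N : ℝ) ^ 2)) := by
    rw [Real.log_mul (by positivity) (by positivity), Real.log_div (by positivity) (by positivity),
      Real.log_pow, Real.log_pow, hl4, LN, Real.log_pow]
    push_cast
    field_simp
    ring
  have hr1 : (1 + (N : ℝ) ^ 2 / (μ + m)) * (4 ^ k / (N : ℝ) ^ 2) ≤ μ + 4 := by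
    have : (1 + (N : ℝ) ^ 2 / (μ + m)) * (4 ^ k / (N : ℝ) ^ 2) =
        4 ^ k / (N : ℝ) ^ 2 + 4 ^ k / (μ + m) := by field_simp
    rw [this]
    have a1 : (4 : ℝ) ^ k / (N : ℝ) ^ 2 ≤ 1 := div_le_one_of_le₀ (h1.trans h3) (by positivity)
    have a2 : (4 : ℝ) ^ k / (μ + m) ≤ 1 := div_le_one_of_le₀ (by linarith) (by positivity)
    linarith
  have hr2 : (μ + 4)⁻¹ ≤ (1 + (N : ℝ) ^ 2 / (μ + m)) * (4 ^ k / (N : ℝ) ^ 2) := by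
    have : (1 + (N : ℝ) ^ 2 / (μ + m)) * (4 ^ k / (N : ℝ) ^ 2) =
        4 ^ k / (N : ℝ) ^ 2 + 4 ^ k / (μ + m) := by field_simp
    rw [this]
    have a1 : (0 : ℝ) ≤ 4 ^ k / (N : ℝ) ^ 2 := by positivity
    have a2 : (μ + 4)⁻¹ ≤ 4 ^ k / (μ + m) := by
      rw [inv_eq_one_div, div_le_div_iff₀ (by positivity) (by positivity)]
      rw [pow_succ] at h2
      nlinarith
    linarith
  have hlog : |Real.log ((1 + (N : ℝ) ^ 2 / (μ + m)) * (4 ^ k / (N : ℝ) ^ 2))| ≤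
      Real.log (μ + 4) := by
    rw [abs_le]
    constructor
    · rw [← Real.log_inv]; exact Real.log_le_log (by positivity) hr2
    · exact Real.log_le_log (by positivity) hr1
  rw [e, abs_mul, abs_of_nonneg (by positivity)]
  refine (mul_le_mul_of_nonneg_left hlog (by positivity)).trans_eq ?_
  field_simp

/-- The factor `hfac` is nearly constant on a shell inside the disc: `LN_close` and the Lipschitz
bound for `G n` give the `O(1 / log N)` term, and removing `μ` from the denominator costs at most
`μ / |ℓ|²`. -/
theorem hfac_close {c : ℝ} (hc : 0 ≤ c) {n : ℕ} (hn : 2 ≤ n) {μ : ℝ} (hμ : 0 ≤ μ) {N : ℕ}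
    (hN : 2 ≤ N) {k : ℕ} {m : ℝ}
    (h1 : 4 ^ k ≤ m) (h2 : m ≤ 4 ^ (k + 1)) (h3 : m ≤ (N : ℝ) ^ 2)
    (hx : 0 ≤ c - k * (c * Real.log 2 / Real.log N)) :
    |hfac c n μ N m - 1 / (1 + G n (c - k * (c * Real.log 2 / Real.log N)))| ≤
      Real.log (μ + 4) / (2 * Real.log 2) * (c * Real.log 2 / Real.log N) + μ * (1 / 4) ^ k := by
  obtain ⟨h0, hL⟩ := G_props hn
  have h4k : (1 : ℝ) ≤ 4 ^ k := one_le_pow₀ (by norm_num)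
  have hm : 1 ≤ m := h4k.trans h1
  have hy := LN_nonneg hc N (x := μ + m) (by positivity)
  have hcl := LN_close hc hμ hN h1 h2 h3
  set x := c - k * (c * Real.log 2 / Real.log N)
  set y := LN c N (μ + m) with hyd
  have hgx := h0 x hx
  have hgy := h0 y hy
  have a1 : |hfac c n μ N m - 1 / (1 + G n y)| ≤ μ * (1 / 4) ^ k := by
    have e : hfac c n μ N m - 1 / (1 + G n y) =
        -(μ / ((μ + m * (1 + G n y)) * (1 + G n y))) := by
      rw [hfac, ← hyd]; field_simp; ring
    rw [e, abs_neg, abs_of_nonneg (by positivity), div_eq_mul_one_div, one_div_pow]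
    refine mul_le_mul_of_nonneg_left (one_div_le_one_div_of_le (by positivity) ?_) hμ
    refine h1.trans ?_
    have p1 : m ≤ μ + m * (1 + G n y) := by nlinarith [mul_nonneg (zero_le_one.trans hm) hgy]
    exact p1.trans (le_mul_of_one_le_right (by linarith) (by linarith))
  have a2 : |G n y - G n x| ≤ |y - x| := by
    rcases le_total x y with h | h
    · exact (hL x y hx h).trans (le_abs_self _)
    · rw [abs_sub_comm, abs_sub_comm y x]; exact (hL y x hy h).trans (le_abs_self _)
  have a3 := (abs_recip_sub_le hgy hgx).trans (a2.trans hcl)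
  calc _ ≤ |hfac c n μ N m - 1 / (1 + G n y)| + |1 / (1 + G n y) - 1 / (1 + G n x)| :=
        abs_sub_le _ _ _
    _ ≤ _ := by linarith

/-! ### The sum over all shells -/

/-- The Riemann sum of `1 / (1 + G n)` over the points `c - k δ` telescopes
against `G (n + 1)`. -/
theorem riemann_close {n : ℕ} (hn : 2 ≤ n) {c δ : ℝ} (hδ : 0 ≤ δ) {K : ℕ}
    (h1 : K * δ ≤ c) (h2 : c ≤ (K + 1) * δ) :
    |δ * ∑ k ∈ Finset.range K, 1 / (1 + G n (c - k * δ)) - G (n + 1) c| ≤ (c + 1) * δ := by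
  have hg := G_props (Nat.le_succ_of_le hn)
  have tele : ∑ k ∈ Finset.range K, (G (n + 1) (c - k * δ) - G (n + 1) (c - (k + 1 : ℕ) * δ)) =
      G (n + 1) c - G (n + 1) (c - K * δ) := by
    rw [Finset.sum_range_sub' (fun k : ℕ => G (n + 1) (c - k * δ))]; simp
  have e : δ * ∑ k ∈ Finset.range K, 1 / (1 + G n (c - k * δ)) - G (n + 1) c =
      ∑ k ∈ Finset.range K, (δ * (1 / (1 + G n (c - k * δ))) -
        (G (n + 1) (c - k * δ) - G (n + 1) (c - (k + 1 : ℕ) * δ))) - G (n + 1) (c - K * δ) := by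
    rw [Finset.sum_sub_distrib, tele, Finset.mul_sum]; ring
  have b1 : |∑ k ∈ Finset.range K, (δ * (1 / (1 + G n (c - k * δ))) -
        (G (n + 1) (c - k * δ) - G (n + 1) (c - (k + 1 : ℕ) * δ)))| ≤ K * δ ^ 2 := by
    refine (Finset.abs_sum_le_sum_abs _ _).trans ?_
    refine (Finset.sum_le_card_nsmul _ _ (δ ^ 2) fun k hk => ?_).trans_eq (by simp)
    have hk' : ((k + 1 : ℕ) : ℝ) ≤ K := by exact_mod_cast Finset.mem_range.1 hk
    have hd : c - k * δ - (c - (k + 1 : ℕ) * δ) = δ := by push_cast; ring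
    have := G_taylor hn (x := c - k * δ) (y := c - (k + 1 : ℕ) * δ)
      (by nlinarith) (by linarith)
    rwa [hd] at this
  have hx : 0 ≤ c - K * δ := by linarith
  have b2 : |G (n + 1) (c - K * δ)| ≤ δ := by
    have := hg.2 0 _ le_rfl hx
    have z : G (n + 1) 0 = 0 := by rw [G_succ hn]; simp
    rw [z, sub_zero, sub_zero] at this
    linarith
  rw [e]
  refine (abs_sub _ _).trans ?_
  nlinarith

theorem disjoint_shell {i j : ℕ} (h : i ≠ j) : Disjoint (shell i) (shell j) := by
  wlog hij : i < j generalizing i j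
  · exact (this h.symm (by omega)).symm
  refine Finset.disjoint_left.2 fun l h1 h2 => ?_
  have a := (mem_shell.1 h1).2
  have b := (mem_shell.1 h2).1
  have : (4 : ℝ) ^ (i + 1) ≤ 4 ^ j := pow_le_pow_right₀ (by norm_num) hij
  linarith

open Classical in
/-- The lattice sum, split into the shells `k ≤ K` that can meet the disc `|ℓ| ≤ N`. -/
theorem tsum_eq_shells (c : ℝ) (n : ℕ) (μ : ℝ) {N K : ℕ} (hK : N < 2 ^ (K + 1)) :
    (∑' ℓ : ℤ × ℤ,
      if 1 ≤ Real.sqrt (nsq ℓ) ∧ Real.sqrt (nsq ℓ) ≤ (N : ℝ) then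
        (((ℓ.1 : ℝ) ^ 2 - (ℓ.2 : ℝ) ^ 2) ^ 2 / (4 * Real.pi ^ 2 * (nsq ℓ) ^ 2)) *
          (1 / (μ + nsq ℓ * (1 + G n (LN c N (μ + nsq ℓ)))))
      else 0) =
    1 / (4 * Real.pi ^ 2) * ∑ k ∈ Finset.range (K + 1), ∑ l ∈ shell k,
      wt l * (if nsq l ≤ (N : ℝ) ^ 2 then hfac c n μ N (nsq l) else 0) := by
  have hiff : ∀ l, Real.sqrt (nsq l) ≤ (N : ℝ) ↔ nsq l ≤ (N : ℝ) ^ 2 := fun l =>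
    Real.sqrt_le_left (by positivity)
  rw [tsum_eq_sum (s := (Finset.range (K + 1)).biUnion shell),
    Finset.sum_biUnion fun i _ j _ h => disjoint_shell h, Finset.mul_sum]
  · refine Finset.sum_congr rfl fun k _ => ?_
    rw [Finset.mul_sum]
    refine Finset.sum_congr rfl fun l hl => ?_
    have h1 : 1 ≤ nsq l := (one_le_pow₀ (by norm_num)).trans (mem_shell.1 hl).1
    have h1' : 1 ≤ Real.sqrt (nsq l) := Real.one_le_sqrt.2 h1
    have h0 : nsq l ≠ 0 := by positivity
    simp only [h1', true_and, hiff]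
    split_ifs
    · rw [wt, hfac]
      field_simp
    · simp
  · intro l hl
    rw [if_neg]
    rintro ⟨h1, h2⟩
    rw [Real.one_le_sqrt] at h1
    rw [hiff] at h2
    obtain ⟨k, hk1, hk2⟩ := exists_nat_pow_near h1 (by norm_num : (1 : ℝ) < 4)
    apply hl
    rw [Finset.mem_biUnion]
    refine ⟨k, ?_, mem_shell.2 ⟨hk1, hk2⟩⟩
    rw [Finset.mem_range]
    have hN : (N : ℝ) < 2 ^ (K + 1) := by exact_mod_cast hK
    have : (4 : ℝ) ^ k < 4 ^ (K + 1) := by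
      calc (4 : ℝ) ^ k ≤ (N : ℝ) ^ 2 := hk1.trans h2
        _ < (2 ^ (K + 1)) ^ 2 := by gcongr
        _ = 4 ^ (K + 1) := by rw [← pow_mul, mul_comm, pow_mul]; norm_num
    exact (pow_lt_pow_iff_right₀ (by norm_num)).1 this

/-- Error bound for the sum over all shells, for a fixed `N` with `K = ⌊log₂ N⌋`. -/
theorem shells_close {c : ℝ} (hc : 0 < c) {n : ℕ} (hn : 2 ≤ n) {μ : ℝ} (hμ : 0 ≤ μ) {N K : ℕ}
    (hN : 2 ≤ N) (hK1 : 2 ^ K ≤ N) (hK2 : N < 2 ^ (K + 1)) {M V : ℝ}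
    (hM : ∀ k, ∑ l ∈ shell k, wt l ≤ M) (hV : 0 ≤ V) {δ : ℝ}
    (hδ : δ = c * Real.log 2 / Real.log N) :
    |δ * ∑ k ∈ Finset.range (K + 1), ∑ l ∈ shell k,
      wt l * (if nsq l ≤ (N : ℝ) ^ 2 then hfac c n μ N (nsq l) else 0) - V * G (n + 1) c| ≤
    c * ((K : ℝ)⁻¹ * ∑ k ∈ Finset.range K, |∑ l ∈ shell k, wt l - V|) +
      (M * (Real.log (μ + 4) / (2 * Real.log 2) * c + 2 * μ + 1) + V * (c + 1)) * δ := by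
  have hN' : (2 : ℝ) ≤ N := by exact_mod_cast hN
  have hΛ : 0 < Real.log N := Real.log_pos (by linarith)
  have hl2 : 0 < Real.log 2 := Real.log_pos (by norm_num)
  have hδ0 : 0 < δ := by rw [hδ]; positivity
  have hM0 : 0 ≤ M := (Finset.sum_nonneg fun l _ => wt_nonneg l).trans (hM 0)
  have hlog1 : K * Real.log 2 ≤ Real.log N := by
    rw [← Real.log_pow]; exact Real.log_le_log (by positivity) (by exact_mod_cast hK1)
  have hlog2 : Real.log N ≤ (K + 1) * Real.log 2 := by
    have := Real.log_le_log (by positivity) (by exact_mod_cast hK2.le : (N : ℝ) ≤ 2 ^ (K + 1))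
    rwa [Real.log_pow, Nat.cast_succ] at this
  have hK0 : 0 < K := by
    rcases Nat.eq_zero_or_pos K with rfl | h
    · norm_num at hK2; omega
    · exact h
  have hK0' : (0 : ℝ) < K := by exact_mod_cast hK0
  have hc1 : K * δ ≤ c := by
    rw [hδ, ← mul_div_assoc, div_le_iff₀ hΛ]; nlinarith
  have hc2 : c ≤ (K + 1) * δ := by
    rw [hδ, ← mul_div_assoc, le_div_iff₀ hΛ]; nlinarith
  set C := Real.log (μ + 4) / (2 * Real.log 2) with hC
  have hC0 : 0 ≤ C := div_nonneg (Real.log_nonneg (by linarith)) (by positivity)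
  set a : ℕ → ℝ := fun k => ∑ l ∈ shell k, wt l with ha
  set f : ℕ → ℝ := fun k => 1 / (1 + G n (c - k * δ)) with hf
  set b : ℕ → ℝ := fun k => ∑ l ∈ shell k,
      wt l * (if nsq l ≤ (N : ℝ) ^ 2 then hfac c n μ N (nsq l) else 0) with hb
  have ha0 : ∀ k, 0 ≤ a k := fun k => Finset.sum_nonneg fun l _ => wt_nonneg l
  have hpos : ∀ k l, l ∈ shell k → 0 < nsq l := fun k l hl =>
    lt_of_lt_of_le (by positivity) (mem_shell.1 hl).1
  have hbK : |b K| ≤ M := by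
    have h0 : 0 ≤ b K := Finset.sum_nonneg fun l hl => by
      refine mul_nonneg (wt_nonneg l) ?_
      split_ifs
      · exact (hfac_mem hc.le hn hμ N (hpos K l hl)).1
      · exact le_rfl
    rw [abs_of_nonneg h0]
    refine (Finset.sum_le_sum fun l hl => ?_).trans (hM K)
    refine mul_le_of_le_one_right (wt_nonneg l) ?_
    split_ifs
    · exact (hfac_mem hc.le hn hμ N (hpos K l hl)).2
    · exact zero_le_one
  have hxk : ∀ k < K, 0 ≤ c - k * δ := fun k hk => by
    have : (k : ℝ) ≤ K := by exact_mod_cast hk.le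
    nlinarith
  have hf01 : ∀ k < K, |f k| ≤ 1 := fun k hk => by
    have := (G_props hn).1 _ (hxk k hk)
    rw [hf, abs_of_nonneg (by positivity)]
    exact div_le_one_of_le₀ (by linarith) (by positivity)
  have hbk : ∀ k < K, |b k - a k * f k| ≤ M * (C * δ + μ * (1 / 4) ^ k) := fun k hk => by
    have hNk : (4 : ℝ) ^ (k + 1) ≤ (N : ℝ) ^ 2 := by
      calc (4 : ℝ) ^ (k + 1) ≤ 4 ^ K := pow_le_pow_right₀ (by norm_num) hk
        _ = (2 ^ K) ^ 2 := by rw [← pow_mul, mul_comm, pow_mul]; norm_num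
        _ ≤ (N : ℝ) ^ 2 := by gcongr; exact_mod_cast hK1
    have e : b k - a k * f k = ∑ l ∈ shell k, wt l * (hfac c n μ N (nsq l) - f k) := by
      rw [hb, ha]
      simp only
      rw [Finset.sum_mul, ← Finset.sum_sub_distrib]
      refine Finset.sum_congr rfl fun l hl => ?_
      rw [if_pos ((mem_shell.1 hl).2.le.trans hNk), mul_sub]
    rw [e]
    refine (Finset.abs_sum_le_sum_abs _ _).trans ?_
    calc _ ≤ ∑ l ∈ shell k, wt l * (C * δ + μ * (1 / 4) ^ k) := by
          refine Finset.sum_le_sum fun l hl => ?_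
          rw [abs_mul, abs_of_nonneg (wt_nonneg l)]
          have hl' := mem_shell.1 hl
          have hx := hxk k hk
          rw [hδ] at hx
          have := hfac_close hc.le hn hμ hN hl'.1 hl'.2.le (hl'.2.le.trans hNk) hx
          rw [← hδ] at this
          exact mul_le_mul_of_nonneg_left this (wt_nonneg l)
      _ = a k * (C * δ + μ * (1 / 4) ^ k) := by rw [ha, Finset.sum_mul]
      _ ≤ _ := mul_le_mul_of_nonneg_right (hM k) (by positivity)
  have s1 : |∑ k ∈ Finset.range K, (b k - a k * f k)| ≤ M * (C * c + 2 * μ) := by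
    refine (Finset.abs_sum_le_sum_abs _ _).trans
      ((Finset.sum_le_sum fun k hk => hbk k (Finset.mem_range.1 hk)).trans ?_)
    rw [← Finset.mul_sum, Finset.sum_add_distrib, ← Finset.mul_sum (f := fun k => (1 / 4 : ℝ) ^ k)]
    refine mul_le_mul_of_nonneg_left ?_ hM0
    have g1 : ∑ k ∈ Finset.range K, (1 / 4 : ℝ) ^ k ≤ 2 := by
      have : (0 : ℝ) ≤ (1 / 4) ^ K := by positivity
      rw [geom_sum_eq (by norm_num), div_le_iff_of_neg (by norm_num)]
      linarith
    have g2 : ∑ k ∈ Finset.range K, C * δ ≤ C * c := by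
      rw [Finset.sum_const, Finset.card_range, nsmul_eq_mul]; nlinarith
    nlinarith
  have s2 : |∑ k ∈ Finset.range K, (a k - V) * f k| ≤ ∑ k ∈ Finset.range K, |a k - V| := by
    refine (Finset.abs_sum_le_sum_abs _ _).trans (Finset.sum_le_sum fun k hk => ?_)
    rw [abs_mul]
    exact mul_le_of_le_one_right (abs_nonneg _) (hf01 k (Finset.mem_range.1 hk))
  have s3 := riemann_close hn hδ0.le hc1 hc2
  -- The last shell, `k = K`, is only partly inside the disc and is bounded by `M`.
  have e : δ * ∑ k ∈ Finset.range (K + 1), b k - V * G (n + 1) c =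
      δ * (∑ k ∈ Finset.range K, (b k - a k * f k)) +
      δ * (∑ k ∈ Finset.range K, (a k - V) * f k) + δ * b K +
      V * (δ * ∑ k ∈ Finset.range K, f k - G (n + 1) c) := by
    simp only [Finset.sum_range_succ, sub_mul, Finset.sum_sub_distrib, ← Finset.mul_sum]
    ring
  have hδK : δ ≤ c * (K : ℝ)⁻¹ := by
    rw [← div_eq_mul_inv, le_div_iff₀ hK0']; linarith
  have hS : 0 ≤ ∑ k ∈ Finset.range K, |a k - V| := Finset.sum_nonneg fun _ _ => abs_nonneg _
  rw [e]
  refine (abs_add_le _ _).trans ?_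
  refine (add_le_add_left (abs_add_le _ _) _).trans ?_
  refine (add_le_add_left (add_le_add_left (abs_add_le _ _) _) _).trans ?_
  rw [abs_mul, abs_mul, abs_mul, abs_mul, abs_of_pos hδ0, abs_of_nonneg hV]
  have t1 := mul_le_mul_of_nonneg_left s1 hδ0.le
  have t2 := mul_le_mul_of_nonneg_left s2 hδ0.le
  have t3 := mul_le_mul_of_nonneg_left hbK hδ0.le
  have t4 := mul_le_mul_of_nonneg_left s3 hV
  have t5 := mul_le_mul_of_nonneg_right hδK hS
  linarith

open Classical in
theorem stmt12 (lam : ℝ) (hlam : 0 < lam) (n : ℕ) (hn : 2 ≤ n) (μ : ℝ) (hμ : 0 ≤ μ) :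
    Filter.Tendsto
      (fun N : ℕ =>
        (2 * lam ^ 2 / Real.log (N : ℝ)) *
          ∑' ℓ : ℤ × ℤ,
            if 1 ≤ Real.sqrt (nsq ℓ) ∧ Real.sqrt (nsq ℓ) ≤ (N : ℝ) then
              (((ℓ.1 : ℝ) ^ 2 - (ℓ.2 : ℝ) ^ 2) ^ 2 / (4 * Real.pi ^ 2 * (nsq ℓ) ^ 2)) *
                (1 / (μ + nsq ℓ * (1 + G n (LN (lam ^ 2 / Real.pi) N (μ + nsq ℓ)))))
            else 0)
      Filter.atTop (nhds (G (n + 1) (lam ^ 2 / Real.pi) / 2)) := by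
  have hπ := Real.pi_pos
  have hl2 : 0 < Real.log 2 := Real.log_pos (by norm_num)
  have hc : 0 < lam ^ 2 / Real.pi := by positivity
  set c := lam ^ 2 / Real.pi with hcd
  set V := Real.pi * Real.log 2 with hV
  obtain ⟨M, hM⟩ := tendsto_shell.bddAbove_range
  have hM' : ∀ k, ∑ l ∈ shell k, wt l ≤ M := fun k => hM ⟨k, rfl⟩
  have hK : Filter.Tendsto (fun N : ℕ => Nat.log 2 N) Filter.atTop Filter.atTop :=
    Filter.tendsto_atTop.2 fun b => by
      filter_upwards [Filter.eventually_ge_atTop (2 ^ b)] with N hN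
      exact Nat.le_log_of_pow_le (by norm_num) hN
  have hδ : Filter.Tendsto (fun N : ℕ => c * Real.log 2 / Real.log N) Filter.atTop (nhds 0) :=
    (Real.tendsto_log_atTop.comp tendsto_natCast_atTop_atTop).const_div_atTop _
  have hces : Filter.Tendsto (fun K : ℕ => (K : ℝ)⁻¹ * ∑ k ∈ Finset.range K,
      |∑ l ∈ shell k, wt l - V|) Filter.atTop (nhds 0) := by
    refine Filter.Tendsto.cesaro ?_
    have := (tendsto_shell.sub_const V).abs
    rwa [sub_self, abs_zero] at this
  have hmain : Filter.Tendsto (fun N : ℕ => (c * Real.log 2 / Real.log N) *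
      ∑ k ∈ Finset.range (Nat.log 2 N + 1), ∑ l ∈ shell k,
      wt l * (if nsq l ≤ (N : ℝ) ^ 2 then hfac c n μ N (nsq l) else 0)) Filter.atTop
      (nhds (V * G (n + 1) c)) := by
    rw [tendsto_iff_dist_tendsto_zero]
    have hb := ((hces.comp hK).const_mul c).add
      (hδ.const_mul (M * (Real.log (μ + 4) / (2 * Real.log 2) * c + 2 * μ + 1) + V * (c + 1)))
    rw [mul_zero, mul_zero, add_zero] at hb
    refine squeeze_zero' (Filter.Eventually.of_forall fun _ => dist_nonneg) ?_ hb
    filter_upwards [Filter.eventually_ge_atTop 2] with N hN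
    rw [Real.dist_eq]
    exact shells_close hc hn hμ hN (Nat.pow_log_le_self 2 (by omega))
      (Nat.lt_pow_succ_log_self (by norm_num) N) hM' (by positivity) rfl
  have hfin := hmain.const_mul (1 / (2 * Real.pi * Real.log 2))
  have hlim : 1 / (2 * Real.pi * Real.log 2) * (V * G (n + 1) c) = G (n + 1) c / 2 := by
    rw [hV]; field_simp
  rw [hlim] at hfin
  refine hfin.congr' ?_
  filter_upwards [Filter.eventually_ge_atTop 2] with N hN
  have hN' : (2 : ℝ) ≤ N := by exact_mod_cast hN
  have hΛ : 0 < Real.log N := Real.log_pos (by linarith)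
  rw [tsum_eq_shells c n μ (Nat.lt_pow_succ_log_self (by norm_num) N)]
  have hlc : lam ^ 2 = c * Real.pi := by rw [hcd]; field_simp
  rw [hlc]
  field_simp
  ring
end
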